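/- arXiv:2201.10540 — 3 statements merged into one kernel-verified Lean document; each statement's English description precedes it below -/
import Mathlib

section
/- Let γ ∈ (0,1], let I = (−∞,0) or I = (0,∞), and let G ∈ C_{c0}^2(ℝ), with b_G > 0 such that G(u) = 0 whenever |u| ≥ b_G. Then for every u ∈ I the limit lim_{ε→0⁺} [−(−Δ)_I^{γ/2}G]_ε(u) exists, and there exists H ∈ L¹(I) such that |[−(−Δ)_I^{γ/2}G]_ε(u)| ≤ H(u) for every u ∈ I and every ε ∈ (0, b_G). -/
open MeasureTheory Filter Set Topology

/-- Transition probability `p(z) = c⋅|z|^{-γ-1}` for `z ≠ 0`, `p(0)=0`. -/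
noncomputable def transP (c γ : ℝ) (z : ℤ) : ℝ :=
  if z = 0 then 0 else c * |(z : ℝ)| ^ (-γ - 1)

/-- Truncated regional fractional Laplacian `[−(−Δ)_I^{γ/2}G]_ε(u)`. -/
noncomputable def regFracLapTrunc (c γ : ℝ) (I : Set ℝ) (G : ℝ → ℝ) (ε u : ℝ) : ℝ :=
  c * ∫ v in I ∩ {v : ℝ | ε ≤ |u - v|}, (G v - G u) / |u - v| ^ (γ + 1)

/-- `G ∈ C_{c0}^2(ℝ)`: twice continuously differentiable, vanishing both near the
origin and outside a compact set. -/
def CcZeroTwo (G : ℝ → ℝ) : Prop :=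
  ContDiff ℝ 2 G ∧ ∃ bbar b : ℝ, 0 < bbar ∧ bbar < b ∧
    (∀ u : ℝ, |u| ≤ bbar → G u = 0) ∧ (∀ u : ℝ, b ≤ |u| → G u = 0)

/-!
Subtract from `G v - G u` the first-order Taylor term at `u` when `|v - u| < δ`. The subtracted
part is odd in `v - u`, so the truncated integral does not change as long as the ball of radius `δ`
around `u` lies in `I` or `G' u = 0`; a small `δ` achieves this for all `u ∈ I` at once, because the
support of `G'` keeps a positive distance from the boundary of `I`. With `T` the support of `G`,
what remains is at most `K * min (δ ^ 2) (z ^ 2) * (1_T u + 1_T (u + z))` for `z = v - u`, and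
`min (δ ^ 2) (z ^ 2) / |z| ^ (γ + 1)` is integrable for `0 < γ < 2`. Dominated convergence gives
the limit. The compensated integrand is moreover integrable in `(u, z)` jointly, so by Fubini its
`L¹` norm in `z` is an integrable function of `u`, which dominates every truncation.
-/

theorem integrableOn_Ioi_min_sq_mul_rpow {γ δ : ℝ} (hγ : γ ∈ Ioo (0 : ℝ) 2) (hδ : 0 < δ) :
    IntegrableOn (fun r : ℝ => min (δ ^ 2) (r ^ 2) * r ^ (-γ - 1)) (Ioi 0) := by
  have hnear : IntegrableOn (fun r : ℝ => r ^ (1 - γ)) (Ioc 0 δ) :=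
    (intervalIntegrable_iff_integrableOn_Ioc_of_le hδ.le).1
      (intervalIntegral.intervalIntegrable_rpow' (by linarith [hγ.2]))
  have hfar : IntegrableOn (fun r : ℝ => δ ^ 2 * r ^ (-γ - 1)) (Ioi δ) :=
    (integrableOn_Ioi_rpow_of_lt (by linarith [hγ.1]) hδ).const_mul _
  rw [← Ioc_union_Ioi_eq_Ioi hδ.le]
  refine IntegrableOn.union ?_ ?_
  · refine hnear.congr_fun (fun r ⟨hr, hrδ⟩ => ?_) measurableSet_Ioc
    rw [min_eq_right (pow_le_pow_left₀ hr.le hrδ 2), ← Real.rpow_two, ← Real.rpow_add hr]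
    ring_nf
  · refine hfar.congr_fun (fun r (hr : δ < r) => ?_) measurableSet_Ioi
    rw [min_eq_left (pow_le_pow_left₀ hδ.le hr.le 2)]

theorem integrable_min_sq_div_norm_rpow {E : Type*} [NormedAddCommGroup E] [NormedSpace ℝ E]
    [FiniteDimensional ℝ E] [Nontrivial E] [MeasurableSpace E] [BorelSpace E] (μ : Measure E)
    [μ.IsAddHaarMeasure] {γ δ : ℝ} (hγ : γ ∈ Ioo (0 : ℝ) 2) (hδ : 0 < δ) :
    Integrable (fun z : E => min (δ ^ 2) (‖z‖ ^ 2) / ‖z‖ ^ (γ + Module.finrank ℝ E)) μ := by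
  refine (integrable_fun_norm_addHaar μ
    (f := fun r : ℝ => min (δ ^ 2) (r ^ 2) / r ^ (γ + Module.finrank ℝ E))).2 ?_
  refine (integrableOn_Ioi_min_sq_mul_rpow hγ hδ).congr_fun (fun r (hr : 0 < r) => ?_)
    measurableSet_Ioi
  have hpow : r ^ (-γ - 1) = r ^ (Module.finrank ℝ E - 1) / r ^ (γ + Module.finrank ℝ E) := by
    rw [← Real.rpow_natCast, ← Real.rpow_sub hr, Nat.cast_sub Module.finrank_pos]
    push_cast
    ring_nf
  simp only [hpow, smul_eq_mul]
  ring

theorem norm_sub_sub_smul_deriv_le {𝕜 F : Type*} [RCLike 𝕜] [NormedAddCommGroup F]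
    [NormedSpace 𝕜 F] {f : 𝕜 → F} {C : NNReal} (hf : Differentiable 𝕜 f)
    (hC : LipschitzWith C (deriv f)) (x h : 𝕜) :
    ‖f (x + h) - f x - h • deriv f x‖ ≤ C * ‖h‖ ^ 2 := by
  have hder : ∀ y ∈ Metric.closedBall x ‖h‖, HasDerivWithinAt (fun y => f y - y • deriv f x)
      (deriv f y - deriv f x) (Metric.closedBall x ‖h‖) y := fun y _ => by
    simpa using ((hf y).hasDerivAt.fun_sub ((hasDerivAt_id y).smul_const _)).hasDerivWithinAt
  have hbound : ∀ y ∈ Metric.closedBall x ‖h‖, ‖deriv f y - deriv f x‖ ≤ C * ‖h‖ := fun y hy => by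
    rw [← dist_eq_norm]
    exact (hC.dist_le_mul y x).trans (by gcongr; exact hy)
  have hmv := (convex_closedBall x ‖h‖).norm_image_sub_le_of_norm_hasDerivWithin_le hder hbound
    (Metric.mem_closedBall_self (norm_nonneg h)) (y := x + h) (by simp)
  calc ‖f (x + h) - f x - h • deriv f x‖
      = ‖f (x + h) - (x + h) • deriv f x - (f x - x • deriv f x)‖ := by
        rw [add_smul]
        congr 1
        abel
    _ ≤ C * ‖h‖ * ‖x + h - x‖ := hmv
    _ = C * ‖h‖ ^ 2 := by
        rw [add_sub_cancel_left]
        ring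

/-- The increment `G (u + z) - G u` with its first-order Taylor term removed for `|z| < δ`: the
numerator of the integrand in the Lévy form of the fractional Laplacian. -/
noncomputable def compensatedIncrement (δ : ℝ) (G : ℝ → ℝ) (u z : ℝ) : ℝ :=
  G (u + z) - G u - (Metric.ball 0 δ).indicator (fun z => z * deriv G u) z

section CompensatedIncrement

variable {γ δ M : ℝ} {C : NNReal} {G : ℝ → ℝ}

theorem abs_compensatedIncrement_le (hδ : 0 < δ) (hG : Differentiable ℝ G)
    (hC : LipschitzWith C (deriv G)) (hM : ∀ x, |G x| ≤ M) (u z : ℝ) :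
    |compensatedIncrement δ G u z| ≤ (C + 2 * M / δ ^ 2) * min (δ ^ 2) (z ^ 2) := by
  have hM0 : 0 ≤ M := (abs_nonneg _).trans (hM 0)
  by_cases hz : |z| < δ
  · have hball : z ∈ Metric.ball (0 : ℝ) δ := by simpa using hz
    have htaylor := norm_sub_sub_smul_deriv_le hG hC u z
    rw [Real.norm_eq_abs, Real.norm_eq_abs, sq_abs, smul_eq_mul] at htaylor
    rw [compensatedIncrement, indicator_of_mem hball,
      min_eq_right (sq_le_sq.2 (by rw [abs_of_pos hδ]; exact hz.le))]
    exact htaylor.trans (by gcongr; exact le_add_of_nonneg_right (by positivity))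
  · have hball : z ∉ Metric.ball (0 : ℝ) δ := by simpa using hz
    rw [compensatedIncrement, indicator_of_notMem hball, sub_zero,
      min_eq_left (sq_le_sq.2 (by rw [abs_of_pos hδ]; exact not_lt.1 hz))]
    calc |G (u + z) - G u| ≤ |G (u + z)| + |G u| := abs_sub _ _
      _ ≤ 2 * M := by linarith [hM (u + z), hM u]
      _ = 2 * M / δ ^ 2 * δ ^ 2 := (div_mul_cancel₀ _ (by positivity)).symm
      _ ≤ (C + 2 * M / δ ^ 2) * δ ^ 2 := by gcongr; exact le_add_of_nonneg_left C.2

theorem compensatedIncrement_eq_zero {u z : ℝ} (hu : u ∉ tsupport G) (hz : u + z ∉ tsupport G) :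
    compensatedIncrement δ G u z = 0 := by
  have hder : deriv G u = 0 :=
    image_eq_zero_of_notMem_tsupport fun h => hu (tsupport_deriv_subset h)
  simp [compensatedIncrement, hder, image_eq_zero_of_notMem_tsupport hu,
    image_eq_zero_of_notMem_tsupport hz]

theorem measurable_compensatedIncrement (hG : Continuous G) :
    Measurable fun p : ℝ × ℝ => compensatedIncrement δ G p.1 p.2 := by
  have hind : Measurable fun p : ℝ × ℝ =>
      (Prod.snd ⁻¹' Metric.ball (0 : ℝ) δ).indicator (fun p => p.2 * deriv G p.1) p :=
    (measurable_snd.mul ((measurable_deriv G).comp measurable_fst)).indicator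
      (measurable_snd Metric.isOpen_ball.measurableSet)
  exact ((hG.measurable.comp (measurable_fst.add measurable_snd)).sub
    (hG.measurable.comp measurable_fst)).sub hind

theorem integrable_compensatedIncrement_div (hγ : γ ∈ Ioo (0 : ℝ) 2) (hδ : 0 < δ)
    (hG : Differentiable ℝ G) (hC : LipschitzWith C (deriv G)) (hM : ∀ x, |G x| ≤ M) (u : ℝ) :
    Integrable fun z => compensatedIncrement δ G u z / |z| ^ (γ + 1) := by
  have hlevy := (integrable_min_sq_div_norm_rpow (volume : Measure ℝ) hγ hδ).const_mul
    (C + 2 * M / δ ^ 2)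
  refine hlevy.mono' ?_ (Eventually.of_forall fun z => ?_)
  · exact (((measurable_compensatedIncrement hG.continuous).comp measurable_prodMk_left).div
      (by fun_prop)).aestronglyMeasurable
  · simpa [abs_of_nonneg (Real.rpow_nonneg (abs_nonneg z) _), mul_div_assoc] using
      div_le_div_of_nonneg_right (abs_compensatedIncrement_le hδ hG hC hM u z)
        (Real.rpow_nonneg (abs_nonneg z) (γ + 1))

theorem abs_compensatedIncrement_le_indicator (hδ : 0 < δ) (hG : Differentiable ℝ G)
    (hC : LipschitzWith C (deriv G)) (hM : ∀ x, |G x| ≤ M) (u z : ℝ) :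
    |compensatedIncrement δ G u z| ≤ (C + 2 * M / δ ^ 2) * min (δ ^ 2) (z ^ 2) *
      ((tsupport G).indicator 1 u + (tsupport G).indicator 1 (u + z)) := by
  have hle := abs_compensatedIncrement_le hδ hG hC hM u z
  have hχ : ∀ x, 0 ≤ (tsupport G).indicator (1 : ℝ → ℝ) x :=
    indicator_nonneg fun _ _ => zero_le_one
  by_cases hu : u ∈ tsupport G
  · refine hle.trans (le_mul_of_one_le_right ((abs_nonneg _).trans hle) ?_)
    simpa [hu] using hχ (u + z)
  by_cases hz : u + z ∈ tsupport G
  · refine hle.trans (le_mul_of_one_le_right ((abs_nonneg _).trans hle) ?_)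
    simpa [hz] using hχ u
  · simp [compensatedIncrement_eq_zero hu hz, hu, hz]

theorem integrable_prod_compensatedIncrement_div (hγ : γ ∈ Ioo (0 : ℝ) 2) (hδ : 0 < δ)
    (hG : Differentiable ℝ G) (hC : LipschitzWith C (deriv G)) (hcs : HasCompactSupport G) :
    Integrable fun p : ℝ × ℝ => compensatedIncrement δ G p.1 p.2 / |p.2| ^ (γ + 1) := by
  obtain ⟨M, hM⟩ := hcs.exists_bound_of_continuous hG.continuous
  set χ : ℝ → ℝ := (tsupport G).indicator 1
  set ν : ℝ → ℝ := fun z => min (δ ^ 2) (z ^ 2) / |z| ^ (γ + 1) with hν_def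
  have hχ : Integrable χ := (integrable_indicator_iff (isClosed_tsupport G).measurableSet).2
    (integrableOn_const hcs.measure_lt_top.ne)
  have hν : Integrable ν := by
    simpa using integrable_min_sq_div_norm_rpow (volume : Measure ℝ) hγ hδ
  have hleft : Integrable fun p : ℝ × ℝ => χ p.1 * ν p.2 := hχ.mul_prod hν
  have hright : Integrable fun p : ℝ × ℝ => χ (p.1 + p.2) * ν p.2 :=
    (measurePreserving_add_prod volume volume).integrable_comp_of_integrable hleft
  have hmeas : Measurable fun p : ℝ × ℝ =>
      compensatedIncrement δ G p.1 p.2 / |p.2| ^ (γ + 1) :=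
    (measurable_compensatedIncrement hG.continuous).div (by fun_prop)
  refine ((hleft.add hright).const_mul (C + 2 * M / δ ^ 2)).mono' hmeas.aestronglyMeasurable
    (Eventually.of_forall fun ⟨u, z⟩ => ?_)
  have hpow : 0 ≤ |z| ^ (γ + 1) := Real.rpow_nonneg (abs_nonneg z) _
  calc ‖compensatedIncrement δ G u z / |z| ^ (γ + 1)‖
      = |compensatedIncrement δ G u z| / |z| ^ (γ + 1) := by
        rw [Real.norm_eq_abs, abs_div, abs_of_nonneg hpow]
    _ ≤ (C + 2 * M / δ ^ 2) * min (δ ^ 2) (z ^ 2) * (χ u + χ (u + z)) / |z| ^ (γ + 1) := by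
        gcongr
        exact abs_compensatedIncrement_le_indicator hδ hG hC hM u z
    _ = (C + 2 * M / δ ^ 2) * (χ u * ν z + χ (u + z) * ν z) := by
        rw [hν_def]
        ring

end CompensatedIncrement

theorem integral_eq_zero_of_odd {E F : Type*} [AddGroup E] [MeasurableSpace E]
    [MeasurableNeg E] [NormedAddCommGroup F] [NormedSpace ℝ F] {μ : Measure E}
    [μ.IsNegInvariant] {f : E → F} (hf : f.Odd) : ∫ x, f x ∂μ = 0 := by
  have : IsAddTorsionFree F := .of_isTorsionFree ℝ F
  refine self_eq_neg.1 ?_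
  rw [← integral_neg, ← integral_neg_eq_self (fun x => -f x) μ]
  simp only [hf _, neg_neg]

/-- The odd kernel `z / |z| ^ s` cut off to the annulus `ε ≤ |z| < δ`. It carries the first-order
Taylor terms by which the compensated and the plain truncated integrands differ. -/
noncomputable def annulusKernel (ε δ s : ℝ) : ℝ → ℝ :=
  (Metric.ball 0 δ \ Metric.ball 0 ε).indicator fun z => z / |z| ^ s

theorem integral_annulusKernel (ε δ s : ℝ) : ∫ z, annulusKernel ε δ s z = 0 := by
  classical
  refine integral_eq_zero_of_odd fun z => ?_
  simp only [annulusKernel, indicator_apply, Set.mem_sdiff, Metric.mem_ball, dist_zero_right,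
    norm_neg, abs_neg, neg_div]
  split_ifs <;> simp only [neg_zero]

theorem integrable_annulusKernel {ε : ℝ} (hε : 0 < ε) (δ s : ℝ) :
    Integrable (annulusKernel ε δ s) := by
  have hpos : ∀ z ∈ Metric.closedBall (0 : ℝ) δ \ Metric.ball 0 ε, 0 < |z| := fun z hz =>
    hε.trans_le (by simpa using hz.2)
  have hcont : ContinuousOn (fun z : ℝ => z / |z| ^ s)
      (Metric.closedBall 0 δ \ Metric.ball 0 ε) :=
    continuousOn_id.div (continuous_abs.continuousOn.rpow_const fun z hz => .inl (hpos z hz).ne')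
      fun z hz => (Real.rpow_pos_of_pos (hpos z hz) s).ne'
  refine (integrable_indicator_iff (measurableSet_ball.diff measurableSet_ball)).2 ?_
  exact (hcont.integrableOn_compact ((isCompact_closedBall 0 δ).diff Metric.isOpen_ball)).mono_set
    (sdiff_subset_sdiff_left Metric.ball_subset_closedBall)

theorem aecover_le_dist {X : Type*} [MetricSpace X] [MeasurableSpace X] [OpensMeasurableSpace X]
    (μ : Measure X) [NullSingletonClass μ] (x : X) :
    AECover μ (𝓝[>] (0 : ℝ)) fun ε => {y | ε ≤ dist x y} where
  ae_eventually_mem := by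
    filter_upwards [μ.ae_ne x] with y hy
    filter_upwards [Ioo_mem_nhdsGT (dist_pos.2 hy.symm)] with ε hε using hε.2.le
  measurableSet ε := (isClosed_le continuous_const (by fun_prop)).measurableSet

section Truncation

variable {γ δ ε u : ℝ} {G : ℝ → ℝ} {I : Set ℝ}

theorem sub_div_abs_rpow_eq_compensatedIncrement_add {v : ℝ} (hv : ε ≤ |u - v|) :
    (G v - G u) / |u - v| ^ (γ + 1) =
      compensatedIncrement δ G u (v - u) / |v - u| ^ (γ + 1) +
        deriv G u * annulusKernel ε δ (γ + 1) (v - u) := by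
  classical
  rw [abs_sub_comm] at hv ⊢
  by_cases hz : |v - u| < δ
  · simp only [compensatedIncrement, annulusKernel, indicator_apply, Set.mem_sdiff, Metric.mem_ball,
      dist_zero_right, Real.norm_eq_abs, hz, not_lt.2 hv, add_sub_cancel, if_true,
      not_false_eq_true, and_self]
    ring
  · simp [compensatedIncrement, annulusKernel, hz]

theorem setIntegral_deriv_mul_annulusKernel (s : ℝ)
    (hu : deriv G u ≠ 0 → Metric.ball u δ ⊆ I) :
    ∫ v in I ∩ {v | ε ≤ |u - v|}, deriv G u * annulusKernel ε δ s (v - u) = 0 := by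
  rcases eq_or_ne (deriv G u) 0 with hder | hder
  · simp only [hder, zero_mul, integral_zero]
  · have hsupp : ∀ v ∉ I ∩ {v | ε ≤ |u - v|}, annulusKernel ε δ s (v - u) = 0 := by
      refine fun v hv => indicator_of_notMem (fun hmem => hv ⟨hu hder ?_, ?_⟩) _
      · simpa [Real.dist_eq] using hmem.1
      · simpa [abs_sub_comm u v] using hmem.2
    rw [integral_const_mul, setIntegral_eq_integral_of_forall_compl_eq_zero hsupp,
      integral_sub_right_eq_self (annulusKernel ε δ s), integral_annulusKernel, mul_zero]

theorem regFracLapTrunc_eq_compensated (c : ℝ)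
    (hint : Integrable fun z => compensatedIncrement δ G u z / |z| ^ (γ + 1))
    (hu : deriv G u ≠ 0 → Metric.ball u δ ⊆ I) (hε : 0 < ε) :
    regFracLapTrunc c γ I G ε u =
      c * ∫ v in I ∩ {v | ε ≤ |u - v|},
        compensatedIncrement δ G u (v - u) / |v - u| ^ (γ + 1) := by
  have hA : MeasurableSet {v : ℝ | ε ≤ |u - v|} := measurableSet_le (by fun_prop) (by fun_prop)
  have hsplit : ∫ v in I ∩ {v | ε ≤ |u - v|}, (G v - G u) / |u - v| ^ (γ + 1) =
      ∫ v in I ∩ {v | ε ≤ |u - v|}, (compensatedIncrement δ G u (v - u) / |v - u| ^ (γ + 1) +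
        deriv G u * annulusKernel ε δ (γ + 1) (v - u)) := by
    rw [inter_comm, ← Measure.restrict_restrict hA]
    exact setIntegral_congr_fun hA fun v hv => sub_div_abs_rpow_eq_compensatedIncrement_add hv
  rw [regFracLapTrunc, hsplit, integral_add (hint.comp_sub_right u).integrableOn
      (((integrable_annulusKernel hε δ _).comp_sub_right u).const_mul _).integrableOn,
    setIntegral_deriv_mul_annulusKernel _ hu, add_zero]

theorem tendsto_regFracLapTrunc (c : ℝ)
    (hint : Integrable fun z => compensatedIncrement δ G u z / |z| ^ (γ + 1))
    (hu : deriv G u ≠ 0 → Metric.ball u δ ⊆ I) :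
    Tendsto (fun ε => regFracLapTrunc c γ I G ε u) (𝓝[>] 0)
      (𝓝 (c * ∫ v in I, compensatedIncrement δ G u (v - u) / |v - u| ^ (γ + 1))) := by
  have hcover := aecover_le_dist (volume.restrict I) u
  have hlim := hcover.integral_tendsto_of_countably_generated
    (hint.comp_sub_right u).integrableOn
  refine (hlim.const_mul c).congr' ?_
  filter_upwards [self_mem_nhdsWithin] with ε hε
  rw [regFracLapTrunc_eq_compensated c hint hu hε, inter_comm,
    Measure.restrict_restrict (hcover.measurableSet ε)]
  rfl

theorem abs_regFracLapTrunc_le (c : ℝ)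
    (hint : Integrable fun z => compensatedIncrement δ G u z / |z| ^ (γ + 1))
    (hu : deriv G u ≠ 0 → Metric.ball u δ ⊆ I) (hε : 0 < ε) :
    |regFracLapTrunc c γ I G ε u| ≤
      |c| * ∫ z, ‖compensatedIncrement δ G u z / |z| ^ (γ + 1)‖ := by
  rw [regFracLapTrunc_eq_compensated c hint hu hε, abs_mul,
    ← integral_sub_right_eq_self (fun z => ‖compensatedIncrement δ G u z / |z| ^ (γ + 1)‖) u]
  gcongr
  exact (norm_integral_le_integral_norm _).trans <|
    setIntegral_le_integral (hint.comp_sub_right u).norm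
      (Eventually.of_forall fun v => norm_nonneg _)

end Truncation

theorem exists_ball_subset_of_disjoint_frontier {X : Type*} [PseudoMetricSpace X] {K s : Set X}
    (hK : IsCompact K) (hKs : Disjoint K (frontier s)) :
    ∃ δ > 0, ∀ x ∈ K ∩ s, Metric.ball x δ ⊆ s := by
  have hsub : K ∩ closure s ⊆ interior s := fun x ⟨hxK, hxs⟩ =>
    by_contra fun hx => disjoint_left.1 hKs hxK ⟨hxs, hx⟩
  obtain ⟨δ, hδ, hthick⟩ :=
    (hK.inter_right isClosed_closure).exists_thickening_subset_open isOpen_interior hsub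
  refine ⟨δ, hδ, fun x hx => ?_⟩
  have hxK : x ∈ K ∩ closure s := ⟨hx.1, subset_closure hx.2⟩
  calc Metric.ball x δ ⊆ Metric.thickening δ (K ∩ closure s) :=
        Metric.ball_subset_thickening hxK δ
    _ ⊆ interior s := hthick
    _ ⊆ s := interior_subset

theorem stmt2_general {γ : ℝ} (hγ : γ ∈ Ioo (0 : ℝ) 2) (c : ℝ) {G : ℝ → ℝ} {C : NNReal}
    (hG : Differentiable ℝ G) (hC : LipschitzWith C (deriv G)) (hcs : HasCompactSupport G)
    {I : Set ℝ} (hI : Disjoint (tsupport (deriv G)) (frontier I)) :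
    (∀ u ∈ I, ∃ L : ℝ,
        Tendsto (fun ε => regFracLapTrunc c γ I G ε u) (𝓝[>] (0 : ℝ)) (𝓝 L)) ∧
    ∃ H : ℝ → ℝ, Integrable H ∧
      ∀ u ∈ I, ∀ ε > 0, |regFracLapTrunc c γ I G ε u| ≤ H u := by
  obtain ⟨M, hM⟩ := hcs.exists_bound_of_continuous hG.continuous
  obtain ⟨δ, hδ, hball⟩ := exists_ball_subset_of_disjoint_frontier hcs.deriv hI
  have hlocal : ∀ u ∈ I, deriv G u ≠ 0 → Metric.ball u δ ⊆ I := fun u hu hder =>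
    hball u ⟨subset_tsupport _ hder, hu⟩
  have hint := integrable_compensatedIncrement_div hγ hδ hG hC hM
  have hprod := integrable_prod_compensatedIncrement_div hγ hδ hG hC hcs
  exact ⟨fun u hu => ⟨_, tendsto_regFracLapTrunc c (hint u) (hlocal u hu)⟩,
    _, hprod.integral_norm_prod_left.const_mul |c|,
    fun u hu ε hε => abs_regFracLapTrunc_le c (hint u) (hlocal u hu) hε⟩

theorem exists_lipschitzWith_deriv {𝕜 F : Type*} [RCLike 𝕜] [NormedAddCommGroup F]
    [NormedSpace 𝕜 F] {f : 𝕜 → F} (hf : ContDiff 𝕜 2 f) (hcs : HasCompactSupport f) :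
    ∃ C : NNReal, LipschitzWith C (deriv f) :=
  ((contDiff_succ_iff_deriv (n := 1)).1 hf).2.2.lipschitzWith_of_hasCompactSupport hcs.deriv
    one_ne_zero

namespace CcZeroTwo

variable {G : ℝ → ℝ}

theorem hasCompactSupport (hG : CcZeroTwo G) : HasCompactSupport G := by
  obtain ⟨-, -, b, -, -, -, hGb⟩ := hG
  refine HasCompactSupport.intro (isCompact_closedBall (0 : ℝ) b) fun x hx => hGb x ?_
  simpa using (not_le.1 (mt Metric.mem_closedBall.2 hx)).le

theorem zero_notMem_tsupport (hG : CcZeroTwo G) : (0 : ℝ) ∉ tsupport G := by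
  obtain ⟨-, bbar, -, hbbar, -, hG0, -⟩ := hG
  rw [notMem_tsupport_iff_eventuallyEq]
  filter_upwards [Metric.closedBall_mem_nhds (0 : ℝ) hbbar] with x hx
  exact hG0 x (by simpa using hx)

theorem disjoint_tsupport_deriv_frontier (hG : CcZeroTwo G) {I : Set ℝ}
    (hI : I = Iio 0 ∨ I = Ioi 0) : Disjoint (tsupport (deriv G)) (frontier I) := by
  have hfrontier : frontier I = {0} := by
    rcases hI with rfl | rfl
    exacts [frontier_Iio, frontier_Ioi]
  rw [hfrontier, disjoint_singleton_right]
  exact fun h => hG.zero_notMem_tsupport (tsupport_deriv_subset h)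

end CcZeroTwo

theorem stmt2 (γ c : ℝ) (hγ : γ ∈ Set.Ioc (0 : ℝ) 1) (hc : 0 < c)
    (hprob : HasSum (transP c γ) 1)
    (I : Set ℝ) (hI : I = Set.Iio (0 : ℝ) ∨ I = Set.Ioi (0 : ℝ))
    (G : ℝ → ℝ) (hG : CcZeroTwo G)
    (bG : ℝ) (hbG : 0 < bG) (hGb : ∀ u : ℝ, bG ≤ |u| → G u = 0) :
    (∀ u ∈ I, ∃ L : ℝ,
        Tendsto (fun ε => regFracLapTrunc c γ I G ε u) (𝓝[>] (0 : ℝ)) (𝓝 L)) ∧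
    ∃ H : ℝ → ℝ, IntegrableOn H I ∧
      ∀ u ∈ I, ∀ ε ∈ Set.Ioo (0 : ℝ) bG, |regFracLapTrunc c γ I G ε u| ≤ H u := by
  obtain ⟨C, hC⟩ := exists_lipschitzWith_deriv hG.1 hG.hasCompactSupport
  obtain ⟨hlim, H, hH, hle⟩ := stmt2_general ⟨hγ.1, hγ.2.trans_lt one_lt_two⟩ c
    (hG.1.differentiable two_ne_zero) hC hG.hasCompactSupport
    (hG.disjoint_tsupport_deriv_frontier hI)
  exact ⟨hlim, H, hH.integrableOn, fun u hu ε hε => hle u hu ε hε.1⟩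
end

section
/- Let γ ∈ (0,2), let I = (−∞,0) or I = (0,∞), and let ρ : ℝ → ℝ be an essentially bounded measurable function such that ∬_{I×I} (ρ(u)−ρ(v))²/|u−v|^{1+γ} du dv < ∞. Let G ∈ C_c^2(ℝ*) if γ ∈ (1,2), and G ∈ C_{c0}^2(ℝ) if γ ∈ (0,1]. Then ∫_I ρ(u) [−(−Δ)_I^{γ/2}G](u) du = −(c_γ/2) ∬_{I×I} (G(u)−G(v))(ρ(u)−ρ(v))/|u−v|^{1+γ} du dv. -/
open MeasureTheory Filter Set Topology

/-- `G ∈ C_c^2(ℝ*)`. -/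
def CcTwoStar (G : ℝ → ℝ) : Prop :=
  ∃ Gm Gp : ℝ → ℝ, ContDiff ℝ 2 Gm ∧ HasCompactSupport Gm ∧
    ContDiff ℝ 2 Gp ∧ HasCompactSupport Gp ∧
    ∀ u : ℝ, G u = if u < 0 then Gm u else Gp u

/-!
For the operator truncated at `ε` the identity is Fubini's theorem together with the symmetry of the
kernel, and it remains to let `ε → 0`. On the right-hand side the energies of `G` and `ρ` are both
finite, so the integrand is integrable by the arithmetic-geometric mean inequality and bounds its
truncations. On the left-hand side, since `ρ` is merely bounded, the truncated operators need an
integrable bound uniform in `ε`. Substituting `w ↦ -w` writes them as integrals of the second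
difference of `G` whose increments are restricted to jumps staying in `I`. This is the full second
difference, which is `O(w ^ 2)`, minus the increments over jumps leaving `I`; the latter are only
`O(|w|)`, but `|w|` is then at least the distance from `u` to the finite set `frontier I`, and the
mass `|w| ^ (-γ)` can be shared between the two variables because `γ < 2`.
-/

/-- The kernel `|w|^{-γ-1}` of the fractional Laplacian, without its normalising constant. For
`γ > 0` the convention `0 ^ s = 0` (`s ≠ 0`) makes it vanish at the origin. -/
noncomputable def fracKernel (γ w : ℝ) : ℝ := |w| ^ (-(γ + 1))

/-- The kernel `|w|^{-γ-1}` cut off to jumps of size `|w| ≥ ε`. -/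
noncomputable def fracKernelTrunc (γ ε : ℝ) : ℝ → ℝ :=
  {w : ℝ | ε ≤ |w|}.indicator (fracKernel γ)

/-- The increment `F (u + w) - F u`, counted only if the endpoint `u + w` lies in `I`. Both `I` and
its complement are used, for the jumps of the regional operator and for those it discards. -/
noncomputable def regionalIncrement (I : Set ℝ) (F : ℝ → ℝ) (u w : ℝ) : ℝ :=
  I.indicator (fun v => F v - F u) (u + w)

/-- The second difference of `F` at `u` in which each of the two increments is counted only if its
endpoint lies in `I`; it symmetrises the principal value defining the regional fractional
Laplacian. -/
noncomputable def regionalSecondDiff (I : Set ℝ) (F : ℝ → ℝ) (u w : ℝ) : ℝ :=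
  regionalIncrement I F u w + regionalIncrement I F u (-w)

section Kernel

variable {γ ε : ℝ}

lemma div_abs_rpow_eq_mul_fracKernel (γ x w : ℝ) :
    x / |w| ^ (γ + 1) = x * fracKernel γ w := by
  rw [fracKernel, Real.rpow_neg (abs_nonneg w), div_eq_mul_inv]

lemma fracKernel_nonneg (γ w : ℝ) : 0 ≤ fracKernel γ w :=
  Real.rpow_nonneg (abs_nonneg w) _

lemma fracKernel_sub_comm (γ u v : ℝ) : fracKernel γ (u - v) = fracKernel γ (v - u) := by
  rw [fracKernel, fracKernel, abs_sub_comm]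

lemma measurable_fracKernel (γ : ℝ) : Measurable (fracKernel γ) :=
  measurable_abs.pow_const _

lemma abs_rpow_mul_fracKernel_le (γ s w : ℝ) : |w| ^ s * fracKernel γ w ≤ |w| ^ (s - γ - 1) :=
  (Real.le_rpow_add (abs_nonneg w) _ _).trans_eq (by ring_nf)

lemma measurableSet_le_abs (ε : ℝ) : MeasurableSet {w : ℝ | ε ≤ |w|} :=
  measurableSet_le measurable_const measurable_abs

lemma measurable_fracKernelTrunc (γ ε : ℝ) : Measurable (fracKernelTrunc γ ε) :=
  (measurable_fracKernel γ).indicator (measurableSet_le_abs ε)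

lemma fracKernelTrunc_nonneg (γ ε w : ℝ) : 0 ≤ fracKernelTrunc γ ε w :=
  indicator_nonneg (fun w _ => fracKernel_nonneg γ w) w

lemma fracKernelTrunc_le (γ ε w : ℝ) : fracKernelTrunc γ ε w ≤ fracKernel γ w :=
  indicator_le_self' (fun w _ => fracKernel_nonneg γ w) w

lemma norm_mul_fracKernelTrunc_le (γ ε x w : ℝ) :
    ‖x * fracKernelTrunc γ ε w‖ ≤ ‖x * fracKernel γ w‖ := by
  rw [norm_mul, norm_mul, Real.norm_of_nonneg (fracKernelTrunc_nonneg _ _ _),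
    Real.norm_of_nonneg (fracKernel_nonneg _ _)]
  exact mul_le_mul_of_nonneg_left (fracKernelTrunc_le _ _ _) (norm_nonneg _)

lemma fracKernelTrunc_neg (γ ε w : ℝ) : fracKernelTrunc γ ε (-w) = fracKernelTrunc γ ε w := by
  simp only [fracKernelTrunc, fracKernel, indicator_apply, mem_ofPred_eq, abs_neg]

lemma fracKernelTrunc_sub_comm (γ ε u v : ℝ) :
    fracKernelTrunc γ ε (u - v) = fracKernelTrunc γ ε (v - u) := by
  rw [← neg_sub, fracKernelTrunc_neg]

lemma tendsto_fracKernelTrunc (hγ : 0 < γ) (w : ℝ) :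
    Tendsto (fun ε => fracKernelTrunc γ ε w) (𝓝[>] (0 : ℝ)) (𝓝 (fracKernel γ w)) := by
  refine tendsto_const_nhds.congr' ?_
  rcases eq_or_ne w 0 with rfl | hw
  · filter_upwards [self_mem_nhdsWithin] with ε (hε : 0 < ε)
    rw [fracKernelTrunc, indicator_of_notMem (by simpa using hε), fracKernel, abs_zero,
      Real.zero_rpow (by linarith)]
  · filter_upwards [mem_nhdsWithin_of_mem_nhds (Iio_mem_nhds (abs_pos.2 hw))] with ε (hε : ε < |w|)
    rw [fracKernelTrunc, indicator_of_mem (by simpa using hε.le)]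

lemma integrable_fracKernelTrunc (hγ : 0 < γ) (hε : 0 < ε) :
    Integrable (fracKernelTrunc γ ε) := by
  have radial : IntegrableOn ((Ici ε).indicator fun r : ℝ => r ^ (-(γ + 1))) (Ioi 0) := by
    refine Integrable.integrableOn ?_
    rw [integrable_indicator_iff measurableSet_Ici, integrableOn_Ici_iff_integrableOn_Ioi]
    exact integrableOn_Ioi_rpow_of_lt (by linarith) hε
  have h := integrable_fun_norm_addHaar (volume : Measure ℝ)
    (f := (Ici ε).indicator fun r : ℝ => r ^ (-(γ + 1)))
  simp only [Module.finrank_self, Nat.sub_self, pow_zero, one_smul] at h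
  exact h.2 radial

lemma tendsto_integral_mul_fracKernelTrunc {α : Type*} [MeasurableSpace α] {μ : Measure α}
    (hγ : 0 < γ) {f w : α → ℝ} (hw : Measurable w) (hf : AEStronglyMeasurable f μ)
    (hfw : Integrable (fun a => f a * fracKernel γ (w a)) μ) :
    Tendsto (fun ε => ∫ a, f a * fracKernelTrunc γ ε (w a) ∂μ) (𝓝[>] (0 : ℝ))
      (𝓝 (∫ a, f a * fracKernel γ (w a) ∂μ)) := by
  refine tendsto_integral_filter_of_dominated_convergence
    (fun a => ‖f a * fracKernel γ (w a)‖) (Eventually.of_forall fun ε => ?_)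
    (Eventually.of_forall fun ε => ae_of_all _ fun a => ?_) hfw.norm
    (ae_of_all _ fun a => (tendsto_fracKernelTrunc hγ (w a)).const_mul (f a))
  · exact hf.mul ((measurable_fracKernelTrunc γ ε).comp hw).aestronglyMeasurable
  · exact norm_mul_fracKernelTrunc_le γ ε (f a) (w a)

lemma abs_mul_fracKernel_le {x w : ℝ} (hγ : 0 < γ) (hx : x ≠ 0) (hxw : |x| ≤ |w|) :
    |w| * fracKernel γ w ≤ |x| ^ (-(γ / 2)) * |w| ^ (-(γ / 2)) := by
  have hx' : 0 < |x| := abs_pos.2 hx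
  calc |w| * fracKernel γ w = |w| ^ (1 : ℝ) * fracKernel γ w := by rw [Real.rpow_one]
    _ ≤ |w| ^ (1 - γ - 1) := abs_rpow_mul_fracKernel_le γ 1 w
    _ = |w| ^ (-(γ / 2)) * |w| ^ (-(γ / 2)) := by
        rw [← Real.rpow_add (hx'.trans_le hxw)]; ring_nf
    _ ≤ |x| ^ (-(γ / 2)) * |w| ^ (-(γ / 2)) := by
        gcongr ?_ * _
        exact Real.rpow_le_rpow_of_nonpos hx' hxw (by linarith)

lemma integrableOn_ball_abs_rpow {s : ℝ} (hs : -1 < s) :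
    IntegrableOn (fun w : ℝ => |w| ^ s) (Metric.ball 0 1) := by
  refine integrableOn_ball_of_norm_le_rpow (C := 1) (α := -s) (by simp)
    (by simpa using neg_lt.1 hs) (ae_of_all _ fun w => ?_)
    (measurable_abs.pow_const s).aestronglyMeasurable
  rw [neg_neg, one_mul, Real.norm_of_nonneg (by positivity), Real.norm_eq_abs]

lemma integrable_indicator_ball_abs_sub_rpow {s : ℝ} (hs : -1 < s) (a : ℝ) :
    Integrable ((Metric.ball a 1).indicator fun u : ℝ => |u - a| ^ s) := by
  refine (((integrableOn_ball_abs_rpow hs).integrable_indicator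
    measurableSet_ball).comp_sub_right a).congr (ae_of_all _ fun u => ?_)
  by_cases hu : |u - a| < 1 <;> simp [hu, Real.dist_eq]

end Kernel

section ProductIntegrals

lemma integral_mul_integral_of_symm {α : Type*} [MeasurableSpace α] {μ : Measure α} [SFinite μ]
    {f g : α → ℝ} {k : α → α → ℝ} (hk : ∀ x y, k x y = k y x)
    (h : Integrable (fun q : α × α => g q.1 * ((f q.2 - f q.1) * k q.1 q.2)) (μ.prod μ)) :
    ∫ x, g x * ∫ y, (f y - f x) * k x y ∂μ ∂μ =
      -(1 / 2) * ∫ q, (f q.1 - f q.2) * (g q.1 - g q.2) * k q.1 q.2 ∂μ.prod μ := by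
  set Φ : α × α → ℝ := fun q => g q.1 * ((f q.2 - f q.1) * k q.1 q.2)
  have fubini : ∫ x, g x * ∫ y, (f y - f x) * k x y ∂μ ∂μ = ∫ q, Φ q ∂μ.prod μ := by
    simp only [Φ, integral_prod _ h, integral_const_mul]
  have symmetrise : ∫ q, (f q.1 - f q.2) * (g q.1 - g q.2) * k q.1 q.2 ∂μ.prod μ =
      -((∫ q, Φ q ∂μ.prod μ) + ∫ q, Φ q.swap ∂μ.prod μ) := by
    rw [← integral_add (f := Φ) (g := fun q => Φ q.swap) h h.swap, ← integral_neg]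
    congr 1 with q
    simp only [Φ, Prod.fst_swap, Prod.snd_swap, hk q.2 q.1]
    ring
  rw [fubini, symmetrise, integral_prod_swap Φ]
  ring

lemma integrable_comp_fst_neg_snd {α : Type*} [MeasurableSpace α] {μ : Measure α} [SFinite μ]
    {f : α × ℝ → ℝ} (hf : Integrable f (μ.prod volume)) :
    Integrable (fun q : α × ℝ => f (q.1, -q.2)) (μ.prod volume) :=
  ((MeasurePreserving.id μ).prod
    (Measure.measurePreserving_neg (volume : Measure ℝ))).integrable_comp_of_integrable hf

lemma integrable_comp_fst_sub {f : ℝ × ℝ → ℝ} (hf : Integrable f) :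
    Integrable fun q : ℝ × ℝ => f (q.1, q.2 - q.1) := by
  refine ((measurePreserving_prod_neg_add volume volume).integrable_comp_of_integrable hf).congr
    (ae_of_all _ fun q => ?_)
  rw [Function.comp_apply, neg_add_eq_sub]

lemma integrable_mul_fracKernel_of_near_of_far {γ : ℝ} {μ : Measure ℝ} [SFinite μ]
    {D : ℝ × ℝ → ℝ} {B b : ℝ → ℝ} (hB : Integrable B μ) (hb : IntegrableOn b (Metric.ball 0 1))
    (hD : Measurable D)
    (near : ∀ᵐ u ∂μ, ∀ w, |w| < 1 → |D (u, w)| * fracKernel γ w ≤ B u * b w)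
    (far : Integrable (fun q => D q * fracKernelTrunc γ 1 q.2) (μ.prod volume)) :
    Integrable (fun q => D q * fracKernel γ q.2) (μ.prod volume) := by
  set S : Set (ℝ × ℝ) := Prod.snd ⁻¹' Metric.ball 0 1
  have hS : MeasurableSet S := measurable_snd measurableSet_ball
  have hDk : Measurable fun q : ℝ × ℝ => D q * fracKernel γ q.2 :=
    hD.mul ((measurable_fracKernel γ).comp measurable_snd)
  have close : Integrable (S.indicator fun q => D q * fracKernel γ q.2) (μ.prod volume) := by
    refine (hB.mul_prod (hb.integrable_indicator measurableSet_ball)).mono'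
      (hDk.indicator hS).aestronglyMeasurable ?_
    filter_upwards [Measure.quasiMeasurePreserving_fst.ae near] with ⟨u, w⟩ h
    by_cases hw : w ∈ Metric.ball (0 : ℝ) 1
    · simpa [S, hw, abs_of_nonneg (fracKernel_nonneg γ w)] using h w (by simpa using hw)
    · simp [S, hw]
  refine (close.add far).congr (ae_of_all _ fun ⟨u, w⟩ => ?_)
  by_cases hw : |w| < 1
  · simp [S, fracKernelTrunc, hw]
  · simp [S, fracKernelTrunc, hw, not_lt.1 hw]

lemma integrable_mul_fracKernel_of_le_sq {γ : ℝ} {K : NNReal} (hγ : γ < 2) {S : Set ℝ}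
    (hS : IsCompact S) {D : ℝ × ℝ → ℝ} (hD : Measurable D)
    (near : ∀ u w, |w| < 1 → |D (u, w)| ≤ S.indicator (fun _ => (K : ℝ)) u * w ^ 2)
    (far : Integrable fun q => D q * fracKernelTrunc γ 1 q.2) :
    Integrable fun q => D q * fracKernel γ q.2 := by
  have hB : Integrable (S.indicator fun _ : ℝ => (K : ℝ)) :=
    (integrable_indicator_iff hS.measurableSet).2 (integrableOn_const hS.measure_ne_top)
  refine integrable_mul_fracKernel_of_near_of_far hB
    (integrableOn_ball_abs_rpow (s := 1 - γ) (by linarith)) hD (ae_of_all _ fun u w hw => ?_) far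
  have hw2 : w ^ 2 * fracKernel γ w ≤ |w| ^ (1 - γ) := by
    have h := abs_rpow_mul_fracKernel_le γ 2 w
    rwa [Real.rpow_two, sq_abs, show (2 : ℝ) - γ - 1 = 1 - γ by ring] at h
  by_cases hu : u ∈ S
  · have h := near u w hw
    simp only [indicator_of_mem hu] at h ⊢
    calc |D (u, w)| * fracKernel γ w ≤ K * w ^ 2 * fracKernel γ w :=
          mul_le_mul_of_nonneg_right h (fracKernel_nonneg γ w)
      _ ≤ K * |w| ^ (1 - γ) := by
          rw [mul_assoc]; exact mul_le_mul_of_nonneg_left hw2 K.coe_nonneg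
  · have h := near u w hw
    simp only [indicator_of_notMem hu, zero_mul, abs_nonpos_iff] at h ⊢
    simp [h]

end ProductIntegrals

section Increments

variable {γ ε : ℝ} {I : Set ℝ} {F : ℝ → ℝ}

lemma abs_regionalIncrement_le (I : Set ℝ) (F : ℝ → ℝ) (u w : ℝ) :
    |regionalIncrement I F u w| ≤ |F (u + w) - F u| :=
  norm_indicator_le_norm_self (fun v => F v - F u) (u + w)

lemma regionalIncrement_univ (F : ℝ → ℝ) (u w : ℝ) :
    regionalIncrement univ F u w = F (u + w) - F u := by
  rw [regionalIncrement, indicator_univ]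

lemma regionalIncrement_add_compl (I : Set ℝ) (F : ℝ → ℝ) (u w : ℝ) :
    regionalIncrement I F u w + regionalIncrement Iᶜ F u w = regionalIncrement univ F u w := by
  simp only [regionalIncrement, indicator_self_add_compl_apply, indicator_univ]

lemma measurable_regionalIncrement (hI : MeasurableSet I) (hF : Measurable F) :
    Measurable fun q : ℝ × ℝ => regionalIncrement I F q.1 q.2 := by
  have hD : Measurable fun q : ℝ × ℝ => F (q.1 + q.2) - F q.1 := by fun_prop
  exact hD.indicator ((measurable_fst.add measurable_snd) hI)

lemma measurable_regionalSecondDiff (hI : MeasurableSet I) (hF : Measurable F) :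
    Measurable fun q : ℝ × ℝ => regionalSecondDiff I F q.1 q.2 :=
  (measurable_regionalIncrement hI hF).add
    ((measurable_regionalIncrement hI hF).comp (measurable_fst.prodMk measurable_snd.neg))

lemma integrable_regionalIncrement_mul_fracKernelTrunc (hI : MeasurableSet I) (hF : Integrable F)
    (hγ : 0 < γ) (hε : 0 < ε) :
    Integrable fun q : ℝ × ℝ => regionalIncrement I F q.1 q.2 * fracKernelTrunc γ ε q.2 := by
  have hk := integrable_fracKernelTrunc hγ hε
  have shifted : Integrable fun q : ℝ × ℝ => F (q.1 + q.2) * fracKernelTrunc γ ε q.2 :=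
    (measurePreserving_add_prod volume volume).integrable_comp_of_integrable (hF.mul_prod hk)
  refine ((shifted.sub (hF.mul_prod hk)).indicator
    ((measurable_fst.add measurable_snd) hI)).congr (ae_of_all _ fun q => ?_)
  by_cases hq : q.1 + q.2 ∈ I <;> simp [regionalIncrement, hq, sub_mul]

lemma integrable_regionalSecondDiff_mul_fracKernelTrunc (hI : MeasurableSet I) (hF : Integrable F)
    (hγ : 0 < γ) (hε : 0 < ε) :
    Integrable fun q : ℝ × ℝ => regionalSecondDiff I F q.1 q.2 * fracKernelTrunc γ ε q.2 := by
  have h := integrable_regionalIncrement_mul_fracKernelTrunc hI hF hγ hε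
  refine (h.add (integrable_comp_fst_neg_snd h)).congr (ae_of_all _ fun q => ?_)
  simp only [Pi.add_apply, regionalSecondDiff, fracKernelTrunc_neg, add_mul]

lemma abs_secondDiff_le {K : NNReal} (hF : Differentiable ℝ F) (hF' : LipschitzWith K (deriv F))
    (u w : ℝ) : |F (u + w) - F u + (F (u - w) - F u)| ≤ K * w ^ 2 := by
  set h : ℝ → ℝ := fun x => F (x + w) - F x
  have hh (x : ℝ) : HasDerivAt h (deriv F (x + w) - deriv F x) x :=
    ((hF _).hasDerivAt.comp_add_const x w).sub (hF x).hasDerivAt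
  have hh' (x : ℝ) : ‖deriv h x‖ ≤ K * |w| := by
    simpa [(hh x).deriv, Real.dist_eq] using hF'.dist_le_mul (x + w) x
  have mean_value := convex_univ.norm_image_sub_le_of_norm_deriv_le
    (fun x _ => (hh x).differentiableAt) (fun x _ => hh' x) (mem_univ (u - w)) (mem_univ u)
  calc |F (u + w) - F u + (F (u - w) - F u)| = ‖h u - h (u - w)‖ := by
        simp only [h, sub_add_cancel, Real.norm_eq_abs]; ring_nf
    _ ≤ K * |w| * ‖u - (u - w)‖ := mean_value
    _ = K * w ^ 2 := by rw [sub_sub_cancel, Real.norm_eq_abs, mul_assoc, abs_mul_abs_self, sq]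

lemma eq_zero_of_notMem_cthickening_tsupport {δ u v : ℝ} (huv : |u - v| ≤ δ)
    (hu : u ∉ Metric.cthickening δ (tsupport F)) : F v = 0 :=
  image_eq_zero_of_notMem_tsupport fun hv =>
    hu (Metric.mem_cthickening_of_dist_le u v δ _ hv huv)

lemma integrable_regionalSecondDiff_univ_mul_fracKernel (hF : ContDiff ℝ 2 F)
    (hFs : HasCompactSupport F) (hγ : γ ∈ Ioo (0 : ℝ) 2) :
    Integrable fun q : ℝ × ℝ => regionalSecondDiff univ F q.1 q.2 * fracKernel γ q.2 := by
  have hF' : ContDiff ℝ 1 (deriv F) := ((contDiff_succ_iff_deriv (n := 1)).1 hF).2.2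
  obtain ⟨K, hK⟩ := ContDiff.lipschitzWith_of_hasCompactSupport hFs.deriv hF' one_ne_zero
  refine integrable_mul_fracKernel_of_le_sq hγ.2 (hFs.isCompact.cthickening (r := 1)) (K := K)
    (measurable_regionalSecondDiff .univ hF.continuous.measurable) (fun u w hw => ?_)
    (integrable_regionalSecondDiff_mul_fracKernelTrunc .univ
      (hF.continuous.integrable_of_hasCompactSupport hFs) hγ.1 one_pos)
  simp only [regionalSecondDiff, regionalIncrement_univ, ← sub_eq_add_neg]
  by_cases hu : u ∈ Metric.cthickening 1 (tsupport F)
  · simpa only [indicator_of_mem hu] using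
      abs_secondDiff_le (hF.differentiable two_ne_zero) hK u w
  · have vanish (x : ℝ) (hx : |u - x| ≤ 1) : F x = 0 :=
      eq_zero_of_notMem_cthickening_tsupport hx hu
    simp [hu, vanish u, vanish (u + w), vanish (u - w), hw.le]

lemma integrable_sq_sub_mul_fracKernel (hF : ContDiff ℝ 1 F) (hFs : HasCompactSupport F)
    (hγ : γ ∈ Ioo (0 : ℝ) 2) :
    Integrable fun q : ℝ × ℝ => (F q.1 - F q.2) ^ 2 * fracKernel γ (q.1 - q.2) := by
  obtain ⟨K, hK⟩ := ContDiff.lipschitzWith_of_hasCompactSupport hFs hF one_ne_zero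
  obtain ⟨C, hC⟩ := hFs.exists_bound_of_continuous hF.continuous
  have hFm := hF.continuous.measurable
  have hD : Measurable fun q : ℝ × ℝ => F (q.1 + q.2) - F q.1 := by fun_prop
  have far : Integrable fun q : ℝ × ℝ =>
      (F (q.1 + q.2) - F q.1) ^ 2 * fracKernelTrunc γ 1 q.2 := by
    have h := integrable_regionalIncrement_mul_fracKernelTrunc .univ
      (hF.continuous.integrable_of_hasCompactSupport hFs) hγ.1 one_pos
    simp only [regionalIncrement_univ] at h
    simpa only [sq, mul_assoc] using h.bdd_mul hD.aestronglyMeasurable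
      (ae_of_all _ fun q => norm_sub_le_of_le (hC (q.1 + q.2)) (hC q.1))
  have shifted : Integrable fun q : ℝ × ℝ => (F (q.1 + q.2) - F q.1) ^ 2 * fracKernel γ q.2 := by
    refine integrable_mul_fracKernel_of_le_sq hγ.2 (hFs.isCompact.cthickening (r := 1))
      (K := K ^ 2) (hD.pow_const 2) (fun u w hw => ?_) far
    by_cases hu : u ∈ Metric.cthickening 1 (tsupport F)
    · have hlip : |F (u + w) - F u| ≤ K * |w| := by
        simpa [Real.dist_eq] using hK.dist_le_mul (u + w) u
      simpa [hu, mul_pow] using pow_le_pow_left₀ (abs_nonneg _) hlip 2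
    · have vanish (x : ℝ) (hx : |u - x| ≤ 1) : F x = 0 :=
        eq_zero_of_notMem_cthickening_tsupport hx hu
      simp [hu, vanish u, vanish (u + w), hw.le]
  refine (integrable_comp_fst_sub shifted).congr (ae_of_all _ fun q => ?_)
  simp only [add_sub_cancel, fracKernel_sub_comm γ q.1, sub_sq_comm (F q.1)]

lemma exists_mem_frontier_abs_sub_le {u v : ℝ} (hu : u ∈ I) (hv : v ∉ I) :
    ∃ a ∈ frontier I, |u - a| ≤ |u - v| := by
  obtain ⟨a, ha, hua⟩ := exists_mem_frontier_infDist_compl_eq_dist hu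
    ((ne_univ_iff_exists_notMem I).2 ⟨v, hv⟩)
  exact ⟨a, ha, hua.symm.trans_le (Metric.infDist_le_dist_of_mem hv)⟩

/- The size `|w|` of a jump out of `I` is shared between the two variables, so that both factors are
locally integrable when `γ < 2`. -/
lemma exists_mem_frontier_abs_regionalIncrement_compl_mul_fracKernel_le (hI : IsOpen I)
    {K : NNReal} (hFK : LipschitzWith K F) (hγ : 0 < γ) {u w : ℝ} (hu : u ∈ I) (hv : u + w ∉ I) :
    ∃ a ∈ frontier I, |u - a| ≤ |w| ∧ |regionalIncrement Iᶜ F u w| * fracKernel γ w ≤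
      |u - a| ^ (-(γ / 2)) * (K * |w| ^ (-(γ / 2))) := by
  obtain ⟨a, ha, hua⟩ := exists_mem_frontier_abs_sub_le hu hv
  rw [sub_add_cancel_left, abs_neg] at hua
  have hua0 : u - a ≠ 0 := sub_ne_zero.2 fun h => hI.inter_frontier_eq.subset ⟨hu, h ▸ ha⟩
  refine ⟨a, ha, hua, ?_⟩
  calc |regionalIncrement Iᶜ F u w| * fracKernel γ w ≤ K * |w| * fracKernel γ w := by
        refine mul_le_mul_of_nonneg_right ?_ (fracKernel_nonneg γ w)
        exact (abs_regionalIncrement_le _ _ _ _).trans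
          (by simpa [Real.dist_eq] using hFK.dist_le_mul (u + w) u)
    _ ≤ K * (|u - a| ^ (-(γ / 2)) * |w| ^ (-(γ / 2))) := by
        rw [mul_assoc]
        exact mul_le_mul_of_nonneg_left (abs_mul_fracKernel_le hγ hua0 hua) K.coe_nonneg
    _ = |u - a| ^ (-(γ / 2)) * (K * |w| ^ (-(γ / 2))) := mul_left_comm _ _ _

lemma integrable_regionalIncrement_compl_mul_fracKernel (hI : IsOpen I) (hfr : (frontier I).Finite)
    {K : NNReal} (hFK : LipschitzWith K F) (hF : Integrable F) (hγ : γ ∈ Ioo (0 : ℝ) 2) :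
    Integrable (fun q : ℝ × ℝ => regionalIncrement Iᶜ F q.1 q.2 * fracKernel γ q.2)
      ((volume.restrict I).prod volume) := by
  have hs : -1 < -(γ / 2) := by linarith [hγ.2]
  have hIc : MeasurableSet Iᶜ := hI.measurableSet.compl
  set β : ℝ → ℝ → ℝ := fun a => (Metric.ball a 1).indicator fun u => |u - a| ^ (-(γ / 2))
  have hβ (a u : ℝ) : 0 ≤ β a u := indicator_nonneg (fun u _ => by positivity) u
  have hB : Integrable (fun u => ∑ a ∈ hfr.toFinset, β a u) (volume.restrict I) :=
    (integrable_finsetSum _ fun a _ => integrable_indicator_ball_abs_sub_rpow hs a).restrict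
  have far := (integrable_regionalIncrement_mul_fracKernelTrunc hIc hF hγ.1 one_pos).restrict
    (s := I ×ˢ univ)
  rw [Measure.volume_eq_prod, ← Measure.prod_restrict, Measure.restrict_univ] at far
  refine integrable_mul_fracKernel_of_near_of_far hB
    ((integrableOn_ball_abs_rpow hs).const_mul (K : ℝ))
    (measurable_regionalIncrement hIc hFK.continuous.measurable) ?_ far
  filter_upwards [ae_restrict_mem hI.measurableSet] with u hu w hw
  by_cases hv : u + w ∈ I
  · simpa [regionalIncrement, hv] using
      mul_nonneg (Finset.sum_nonneg fun a _ => hβ a u) (by positivity)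
  obtain ⟨a, ha, hua, bound⟩ :=
    exists_mem_frontier_abs_regionalIncrement_compl_mul_fracKernel_le hI hFK hγ.1 hu hv
  have hβa : β a u = |u - a| ^ (-(γ / 2)) :=
    indicator_of_mem (by simpa [Real.dist_eq] using hua.trans_lt hw) _
  rw [← hβa] at bound
  refine bound.trans ?_
  gcongr
  exact Finset.single_le_sum (fun a _ => hβ a u) (hfr.mem_toFinset.2 ha)

lemma integrable_regionalSecondDiff_mul_fracKernel (hI : IsOpen I) (hfr : (frontier I).Finite)
    (hF : ContDiff ℝ 2 F) (hFs : HasCompactSupport F) (hγ : γ ∈ Ioo (0 : ℝ) 2) :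
    Integrable (fun q : ℝ × ℝ => regionalSecondDiff I F q.1 q.2 * fracKernel γ q.2)
      ((volume.restrict I).prod volume) := by
  obtain ⟨K, hK⟩ := ContDiff.lipschitzWith_of_hasCompactSupport hFs hF two_ne_zero
  have full := (integrable_regionalSecondDiff_univ_mul_fracKernel hF hFs hγ).restrict
    (s := I ×ˢ univ)
  rw [Measure.volume_eq_prod, ← Measure.prod_restrict, Measure.restrict_univ] at full
  have crossing := integrable_regionalIncrement_compl_mul_fracKernel hI hfr hK
    (hF.continuous.integrable_of_hasCompactSupport hFs) hγ
  refine ((full.sub crossing).sub (integrable_comp_fst_neg_snd crossing)).congr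
    (ae_of_all _ fun q => ?_)
  simp only [Pi.sub_apply, regionalSecondDiff, ← regionalIncrement_add_compl I, fracKernel, abs_neg]
  ring

end Increments

section RegionalLaplacian

variable {γ c C : ℝ} {I : Set ℝ} {F ρ : ℝ → ℝ}

lemma regFracLapTrunc_eq_setIntegral (c γ ε : ℝ) (I : Set ℝ) (F : ℝ → ℝ) (u : ℝ) :
    regFracLapTrunc c γ I F ε u = c * ∫ v in I, (F v - F u) * fracKernelTrunc γ ε (u - v) := by
  have hS : MeasurableSet {v : ℝ | ε ≤ |u - v|} :=
    measurableSet_le measurable_const (measurable_const.sub measurable_id).abs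
  rw [regFracLapTrunc, ← setIntegral_indicator hS]
  congr 2 with v
  by_cases hv : ε ≤ |u - v| <;> simp [fracKernelTrunc, div_abs_rpow_eq_mul_fracKernel, hv]

lemma regFracLapTrunc_congr (c γ ε : ℝ) {F G : ℝ → ℝ} (hI : MeasurableSet I) (hFG : EqOn F G I)
    {u : ℝ} (hu : u ∈ I) : regFracLapTrunc c γ I F ε u = regFracLapTrunc c γ I G ε u := by
  rw [regFracLapTrunc_eq_setIntegral, regFracLapTrunc_eq_setIntegral,
    setIntegral_congr_fun hI fun v hv => by rw [hFG hu, hFG hv]]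

lemma regFracLapTrunc_eq_integral_regionalIncrement (c γ ε : ℝ) (hI : MeasurableSet I)
    (F : ℝ → ℝ) (u : ℝ) :
    regFracLapTrunc c γ I F ε u =
      c * ∫ w, regionalIncrement I F u w * fracKernelTrunc γ ε w := by
  rw [regFracLapTrunc_eq_setIntegral, ← integral_indicator hI, ← integral_add_left_eq_self _ u]
  congr 2 with w
  by_cases hw : u + w ∈ I <;> simp [regionalIncrement, hw, fracKernelTrunc_neg]

lemma ae_regFracLapTrunc_eq_integral_regionalSecondDiff (c : ℝ) {ε : ℝ} (hγ : 0 < γ) (hε : 0 < ε)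
    (hI : MeasurableSet I) (hF : Integrable F) :
    ∀ᵐ u, regFracLapTrunc c γ I F ε u =
      c / 2 * ∫ w, regionalSecondDiff I F u w * fracKernelTrunc γ ε w := by
  filter_upwards [(integrable_regionalIncrement_mul_fracKernelTrunc hI hF hγ hε).prod_right_ae]
    with u (h : Integrable fun w => regionalIncrement I F u w * fracKernelTrunc γ ε w)
  have hneg := integral_neg_eq_self (fun w => regionalIncrement I F u w * fracKernelTrunc γ ε w)
    volume
  have h' := h.comp_neg
  simp only [fracKernelTrunc_neg] at hneg h'
  simp only [regionalSecondDiff, add_mul, integral_add h h', hneg,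
    regFracLapTrunc_eq_integral_regionalIncrement c γ ε hI]
  ring

lemma ae_abs_regFracLapTrunc_le (c : ℝ) {ε : ℝ} (hγ : γ ∈ Ioo (0 : ℝ) 2) (hε : 0 < ε)
    (hI : IsOpen I) (hfr : (frontier I).Finite) (hF : ContDiff ℝ 2 F) (hFs : HasCompactSupport F) :
    ∀ᵐ u ∂volume.restrict I, |regFracLapTrunc c γ I F ε u| ≤
      |c / 2| * ∫ w, ‖regionalSecondDiff I F u w * fracKernel γ w‖ := by
  filter_upwards [ae_restrict_of_ae (ae_regFracLapTrunc_eq_integral_regionalSecondDiff c hγ.1 hε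
      hI.measurableSet (hF.continuous.integrable_of_hasCompactSupport hFs)),
    (integrable_regionalSecondDiff_mul_fracKernel hI hfr hF hFs hγ).prod_right_ae] with u hu hint
  rw [hu, abs_mul]
  exact mul_le_mul_of_nonneg_left (norm_integral_le_of_norm_le hint.norm
    (ae_of_all _ fun w => norm_mul_fracKernelTrunc_le γ ε _ w)) (abs_nonneg _)

lemma integrable_sub_mul_fracKernelTrunc {ε : ℝ} (hγ : 0 < γ) (hε : 0 < ε) (hF : Integrable F) :
    Integrable fun q : ℝ × ℝ => (F q.2 - F q.1) * fracKernelTrunc γ ε (q.1 - q.2) := by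
  refine (integrable_comp_fst_sub (integrable_regionalIncrement_mul_fracKernelTrunc .univ hF hγ
    hε)).congr (ae_of_all _ fun q => ?_)
  simp only [regionalIncrement_univ, add_sub_cancel, fracKernelTrunc_sub_comm γ ε q.1]

lemma integrable_mul_sub_mul_fracKernelTrunc {ε : ℝ} (hγ : 0 < γ) (hε : 0 < ε)
    (hF : Integrable F) (hρ : AEStronglyMeasurable ρ (volume.restrict I))
    (hρC : ∀ᵐ u ∂volume.restrict I, |ρ u| ≤ C) :
    Integrable (fun q : ℝ × ℝ => ρ q.1 * ((F q.2 - F q.1) * fracKernelTrunc γ ε (q.1 - q.2)))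
      ((volume.restrict I).prod (volume.restrict I)) := by
  have h := (integrable_sub_mul_fracKernelTrunc hγ hε hF).restrict (s := I ×ˢ I)
  rw [Measure.volume_eq_prod, ← Measure.prod_restrict] at h
  exact h.bdd_mul hρ.comp_fst (Measure.quasiMeasurePreserving_fst.ae hρC)

lemma setIntegral_mul_regFracLapTrunc (c : ℝ) {ε : ℝ} (hγ : 0 < γ) (hε : 0 < ε)
    (hF : Integrable F) (hρ : AEStronglyMeasurable ρ (volume.restrict I))
    (hρC : ∀ᵐ u ∂volume.restrict I, |ρ u| ≤ C) :
    ∫ u in I, ρ u * regFracLapTrunc c γ I F ε u =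
      -(c / 2) * ∫ q in I ×ˢ I,
        (F q.1 - F q.2) * (ρ q.1 - ρ q.2) * fracKernelTrunc γ ε (q.1 - q.2) := by
  have parts := integral_mul_integral_of_symm (fracKernelTrunc_sub_comm γ ε)
    (integrable_mul_sub_mul_fracKernelTrunc hγ hε hF hρ hρC)
  simp only [regFracLapTrunc_eq_setIntegral, mul_left_comm _ c, integral_const_mul, parts]
  rw [Measure.prod_restrict, ← Measure.volume_eq_prod]
  ring

lemma tendsto_setIntegral_mul_regFracLapTrunc (hγ : γ ∈ Ioo (0 : ℝ) 2) (hI : IsOpen I)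
    (hfr : (frontier I).Finite) (hρ : AEStronglyMeasurable ρ (volume.restrict I))
    (hρC : ∀ᵐ u ∂volume.restrict I, |ρ u| ≤ C) (hF : ContDiff ℝ 2 F) (hFs : HasCompactSupport F)
    {L : ℝ → ℝ} (hL : ∀ᵐ u ∂volume.restrict I,
      Tendsto (fun ε => regFracLapTrunc c γ I F ε u) (𝓝[>] (0 : ℝ)) (𝓝 (L u))) :
    Tendsto (fun ε => ∫ u in I, ρ u * regFracLapTrunc c γ I F ε u) (𝓝[>] (0 : ℝ))
      (𝓝 (∫ u in I, ρ u * L u)) := by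
  have hFi : Integrable F := hF.continuous.integrable_of_hasCompactSupport hFs
  have hM := (integrable_regionalSecondDiff_mul_fracKernel hI hfr hF hFs hγ).integral_norm_prod_left
  refine tendsto_integral_filter_of_dominated_convergence _ ?_ ?_
    ((hM.const_mul |c / 2|).const_mul C) (hL.mono fun u hu => hu.const_mul (ρ u))
  · filter_upwards [self_mem_nhdsWithin] with ε (hε : 0 < ε)
    have h := (integrable_mul_sub_mul_fracKernelTrunc hγ.1 hε hFi hρ hρC).integral_prod_left
    simp only [integral_const_mul] at h
    simpa only [regFracLapTrunc_eq_setIntegral, mul_left_comm _ c] using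
      (h.const_mul c).aestronglyMeasurable
  · filter_upwards [self_mem_nhdsWithin] with ε (hε : 0 < ε)
    filter_upwards [hρC, ae_abs_regFracLapTrunc_le c hγ hε hI hfr hF hFs] with u hρu hLu
    exact (norm_mul_le _ _).trans
      (mul_le_mul hρu hLu (abs_nonneg _) ((abs_nonneg _).trans hρu))

lemma aestronglyMeasurable_sub_mul_sub (hF : Continuous F)
    (hρ : AEStronglyMeasurable ρ (volume.restrict I)) :
    AEStronglyMeasurable (fun q : ℝ × ℝ => (F q.1 - F q.2) * (ρ q.1 - ρ q.2))
      (volume.restrict (I ×ˢ I)) := by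
  have hFF : Continuous fun q : ℝ × ℝ => F q.1 - F q.2 := by fun_prop
  rw [Measure.volume_eq_prod, ← Measure.prod_restrict]
  exact hFF.aestronglyMeasurable.mul (hρ.comp_fst.sub hρ.comp_snd)

lemma integrableOn_sub_mul_sub_mul_fracKernel (hγ : γ ∈ Ioo (0 : ℝ) 2) (hF : ContDiff ℝ 1 F)
    (hFs : HasCompactSupport F) (hρ : AEStronglyMeasurable ρ (volume.restrict I))
    (hρsem : IntegrableOn (fun q : ℝ × ℝ => (ρ q.1 - ρ q.2) ^ 2 * fracKernel γ (q.1 - q.2))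
      (I ×ˢ I)) :
    IntegrableOn (fun q : ℝ × ℝ => (F q.1 - F q.2) * (ρ q.1 - ρ q.2) * fracKernel γ (q.1 - q.2))
      (I ×ˢ I) := by
  have hk : Measurable fun q : ℝ × ℝ => fracKernel γ (q.1 - q.2) :=
    (measurable_fracKernel γ).comp (measurable_fst.sub measurable_snd)
  refine Integrable.mono' ((integrable_sq_sub_mul_fracKernel hF hFs hγ).integrableOn.add hρsem)
    ((aestronglyMeasurable_sub_mul_sub hF.continuous hρ).mul hk.aestronglyMeasurable)
    (ae_of_all _ fun q => ?_)
  have amgm (x y : ℝ) : |x * y| ≤ x ^ 2 + y ^ 2 := by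
    rw [abs_le]; constructor <;> nlinarith [sq_nonneg (x - y), sq_nonneg (x + y)]
  rw [norm_mul, Real.norm_of_nonneg (fracKernel_nonneg _ _), Pi.add_apply, ← add_mul]
  exact mul_le_mul_of_nonneg_right (amgm _ _) (fracKernel_nonneg _ _)

end RegionalLaplacian

lemma CcZeroTwo.ccTwoStar {G : ℝ → ℝ} (hG : CcZeroTwo G) : CcTwoStar G := by
  obtain ⟨hG, -, b, -, -, -, hGb⟩ := hG
  have hGs : HasCompactSupport G :=
    HasCompactSupport.intro (isCompact_closedBall 0 b) fun u hu => hGb u <| by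
      simpa using (lt_of_not_ge (mt mem_closedBall_zero_iff.2 hu)).le
  exact ⟨G, G, hG, hGs, hG, hGs, fun u => (ite_self _).symm⟩

lemma CcTwoStar.exists_contDiff_eqOn {G : ℝ → ℝ} (hG : CcTwoStar G) {I : Set ℝ}
    (hI : I = Iio 0 ∨ I = Ioi 0) :
    ∃ F : ℝ → ℝ, ContDiff ℝ 2 F ∧ HasCompactSupport F ∧ EqOn F G I := by
  obtain ⟨Gm, Gp, hm, hms, hp, hps, hG⟩ := hG
  rcases hI with rfl | rfl
  · exact ⟨Gm, hm, hms, fun u (hu : u < 0) => by rw [hG, if_pos hu]⟩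
  · exact ⟨Gp, hp, hps, fun u (hu : 0 < u) => by rw [hG, if_neg hu.not_gt]⟩

theorem stmt4_general {γ c C : ℝ} (hγ : γ ∈ Ioo (0 : ℝ) 2) {I : Set ℝ} (hI : IsOpen I)
    (hfr : (frontier I).Finite) {ρ : ℝ → ℝ} (hρ : AEStronglyMeasurable ρ (volume.restrict I))
    (hρC : ∀ᵐ u ∂volume.restrict I, |ρ u| ≤ C)
    (hρsem : IntegrableOn
      (fun q : ℝ × ℝ => (ρ q.1 - ρ q.2) ^ 2 / |q.1 - q.2| ^ (1 + γ)) (I ×ˢ I))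
    {F G : ℝ → ℝ} (hF : ContDiff ℝ 2 F) (hFs : HasCompactSupport F) (hFG : EqOn F G I)
    {L : ℝ → ℝ} (hL : ∀ᵐ u ∂volume.restrict I,
      Tendsto (fun ε => regFracLapTrunc c γ I G ε u) (𝓝[>] (0 : ℝ)) (𝓝 (L u))) :
    ∫ u in I, ρ u * L u =
      -(c / 2) * ∫ q in I ×ˢ I,
        (G q.1 - G q.2) * (ρ q.1 - ρ q.2) / |q.1 - q.2| ^ (1 + γ) := by
  have hIm := hI.measurableSet
  have hLF : ∀ᵐ u ∂volume.restrict I,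
      Tendsto (fun ε => regFracLapTrunc c γ I F ε u) (𝓝[>] (0 : ℝ)) (𝓝 (L u)) := by
    filter_upwards [hL, ae_restrict_mem hIm] with u hu huI
    simpa only [regFracLapTrunc_congr c γ _ hIm hFG huI] using hu
  simp only [add_comm 1 γ, div_abs_rpow_eq_mul_fracKernel] at hρsem ⊢
  have hFGρ : ∫ q in I ×ˢ I, (G q.1 - G q.2) * (ρ q.1 - ρ q.2) * fracKernel γ (q.1 - q.2) =
      ∫ q in I ×ˢ I, (F q.1 - F q.2) * (ρ q.1 - ρ q.2) * fracKernel γ (q.1 - q.2) :=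
    setIntegral_congr_fun (hIm.prod hIm) fun q hq => by simp only [hFG hq.1, hFG hq.2]
  have henergy := integrableOn_sub_mul_sub_mul_fracKernel hγ (hF.of_le one_le_two) hFs hρ hρsem
  rw [hFGρ]
  have lhs := tendsto_setIntegral_mul_regFracLapTrunc hγ hI hfr hρ hρC hF hFs hLF
  have rhs := (tendsto_integral_mul_fracKernelTrunc hγ.1 (measurable_fst.sub measurable_snd)
    (aestronglyMeasurable_sub_mul_sub hF.continuous hρ) henergy).const_mul (-(c / 2))
  refine tendsto_nhds_unique lhs (rhs.congr' ?_)
  filter_upwards [self_mem_nhdsWithin] with ε (hε : 0 < ε)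
  exact (setIntegral_mul_regFracLapTrunc c hγ.1 hε
    (hF.continuous.integrable_of_hasCompactSupport hFs) hρ hρC).symm

theorem stmt4 (γ c : ℝ) (hγ : γ ∈ Set.Ioo (0 : ℝ) 2) (hc : 0 < c)
    (hprob : HasSum (transP c γ) 1)
    (I : Set ℝ) (hI : I = Set.Iio (0 : ℝ) ∨ I = Set.Ioi (0 : ℝ))
    (ρ : ℝ → ℝ) (hρmeas : Measurable ρ) (hρbdd : ∃ C : ℝ, ∀ᵐ u : ℝ, |ρ u| ≤ C)
    (hρsem : IntegrableOn
      (fun q : ℝ × ℝ => (ρ q.1 - ρ q.2) ^ 2 / |q.1 - q.2| ^ (1 + γ)) (I ×ˢ I))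
    (G : ℝ → ℝ) (hG1 : 1 < γ → CcTwoStar G) (hG2 : γ ≤ 1 → CcZeroTwo G)
    (L : ℝ → ℝ)
    (hL : ∀ u ∈ I,
      Tendsto (fun ε => regFracLapTrunc c γ I G ε u) (𝓝[>] (0 : ℝ)) (𝓝 (L u))) :
    ∫ u in I, ρ u * L u =
      -(c / 2) * ∫ q in I ×ˢ I,
        (G q.1 - G q.2) * (ρ q.1 - ρ q.2) / |q.1 - q.2| ^ (1 + γ) := by
  obtain ⟨C, hC⟩ := hρbdd
  have hG : CcTwoStar G := (lt_or_ge 1 γ).elim hG1 fun h => (hG2 h).ccTwoStar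
  obtain ⟨F, hF, hFs, hFG⟩ := hG.exists_contDiff_eqOn hI
  have hIo : IsOpen I := by rcases hI with rfl | rfl; exacts [isOpen_Iio, isOpen_Ioi]
  have hfr : (frontier I).Finite := by rcases hI with rfl | rfl <;> simp
  exact stmt4_general hγ hIo hfr hρmeas.aestronglyMeasurable (ae_restrict_of_ae hC) hρsem hF hFs
    hFG (ae_restrict_of_forall_mem hIo.measurableSet hL)
end

section
/- Let γ ∈ (0,2), T > 0 and G ∈ S_Dif. Then lim_{n→∞} (1/n) ∑_{x∈ℤ} sup_{s∈[0,T]} | n^γ ∑_{y∈ℤ} (G(s, y/n) − G(s, x/n)) p(y−x) − [−(−Δ)^{γ/2}G](s, x/n) | = 0. -/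
open MeasureTheory Filter Set Topology

/-- Truncated fractional Laplacian `[−(−Δ)^{γ/2}G]_ε(u)`. -/
noncomputable def fracLapTrunc (c γ : ℝ) (G : ℝ → ℝ) (ε u : ℝ) : ℝ :=
  c * ∫ v in {v : ℝ | ε ≤ |u - v|}, (G v - G u) / |u - v| ^ (γ + 1)

/-- The fractional Laplacian `[−(−Δ)^{γ/2}G](u) = lim_{ε→0⁺} [...]_ε(u)`. -/
noncomputable def fracLap (c γ : ℝ) (G : ℝ → ℝ) (u : ℝ) : ℝ :=
  limUnder (𝓝[>] (0 : ℝ)) (fun ε => fracLapTrunc c γ G ε u)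

/-- `G ∈ S_Dif = P([0,T], C_c^∞(ℝ))`. -/
def SDifMem (G : ℝ → ℝ → ℝ) : Prop :=
  ∃ (k : ℕ) (a : ℕ → ℝ → ℝ),
    (∀ j : ℕ, ContDiff ℝ (⊤ : ℕ∞) (a j) ∧ HasCompactSupport (a j)) ∧
    ∀ t u : ℝ, G t u = ∑ j ∈ Finset.range (k + 1), a j u * t ^ j

/-!
Grouping the steps `w` and `-w` turns the singular integral defining `-(-Δ)^{γ/2} g (u)` into `c`
times the absolutely convergent integral over `(0, ∞)` of
`(g (u + w) + g (u - w) - 2 g u) * w ^ (-γ - 1)`. The same grouping, together with the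
homogeneity of the transition probability, shows that `n ^ γ` times the discrete operator is
*exactly* `c` times the right-endpoint Riemann sum of this integrand with mesh `1 / n`, so only the
error of a quadrature rule has to be bounded.

On a cell of length `η` the error for an integrand `f` is at most `η ∫ ‖f'‖`; the first cell, where
`f'` need not be integrable, is estimated through `f` itself. For a `C^{1,1}` function the second
difference is bounded both by a constant and by a multiple of `w ^ 2`; interpolating between the
two, the integrand is at most of order `w ^ (-γ/2)` and its derivative of order `w ^ (-γ/2 - 1)`, so
the total error is of order `n ^ (-(1 - γ/2))`, uniformly in `u`. When `u` lies far from the support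
of `g`, only steps of length about `|u|` contribute and the error gains a factor
`(1 + |u|) ^ (-γ - 1)`. The averages `(1/n) ∑ₓ (1 + |x/n|) ^ (-γ - 1)` of this factor over the
lattice are bounded in `n`, so the averaged error is itself of order `n ^ (-(1 - γ/2))`.
-/

open scoped NNReal

/-! ### Riemann sums -/

section RiemannSum

variable {E : Type*} [NormedAddCommGroup E] [NormedSpace ℝ E]

lemma hasSum_intervalIntegral_Ioi {F : ℝ → E} {a : ℕ → ℝ} (ha : Monotone a)
    (ha' : Tendsto a atTop atTop) (hF : IntegrableOn F (Ioi (a 0))) :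
    HasSum (fun k => ∫ w in a k..a (k + 1), F w) (∫ w in Ioi (a 0), F w) := by
  have hcover : ⋃ k, Ioc (a k) (a (Order.succ k)) = Ioi (a 0) :=
    iUnion_Ioc_map_succ_eq_Ioi (fun k => ha bot_le) (not_bddAbove_of_tendsto_atTop ha')
  have h := hasSum_integral_iUnion (μ := volume) (fun k => measurableSet_Ioc)
    ha.pairwise_disjoint_on_Ioc_succ (hcover ▸ hF)
  rw [hcover] at h
  exact h.congr_fun fun k => intervalIntegral.integral_of_le (ha k.le_succ)

variable [CompleteSpace E] {f : ℝ → E}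

lemma norm_smul_sub_intervalIntegral_le {a b : ℝ} (hab : a ≤ b)
    (hf : ∀ w ∈ Icc a b, DifferentiableAt ℝ f w)
    (hf' : IntervalIntegrable (deriv f) volume a b) :
    ‖(b - a) • f b - ∫ w in a..b, f w‖ ≤ (b - a) * ∫ w in a..b, ‖deriv f w‖ := by
  have hosc : ∀ w ∈ Icc a b, ‖f b - f w‖ ≤ ∫ t in a..b, ‖deriv f t‖ := fun w hw => by
    have hsub : Icc w b ⊆ Icc a b := Icc_subset_Icc_left hw.1
    rw [← uIcc_of_le hw.2, ← uIcc_of_le hab] at hsub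
    rw [← intervalIntegral.integral_deriv_eq_sub
      (fun t ht => hf t (uIcc_of_le hab ▸ hsub ht)) (hf'.mono_set hsub)]
    exact (intervalIntegral.norm_integral_le_integral_norm hw.2).trans
      (intervalIntegral.integral_mono_interval hw.1 hw.2 le_rfl
        (Eventually.of_forall fun t => norm_nonneg _) hf'.norm)
  have hfi : IntervalIntegrable f volume a b :=
    ContinuousOn.intervalIntegrable fun w hw =>
      (hf w (uIcc_of_le hab ▸ hw)).continuousAt.continuousWithinAt
  calc ‖(b - a) • f b - ∫ w in a..b, f w‖ = ‖∫ w in a..b, (f b - f w)‖ := by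
        rw [intervalIntegral.integral_sub intervalIntegrable_const hfi,
          intervalIntegral.integral_const]
    _ ≤ (∫ t in a..b, ‖deriv f t‖) * |b - a| :=
        intervalIntegral.norm_integral_le_of_norm_le_const fun w hw =>
          hosc w (Ioc_subset_Icc_self (uIoc_of_le hab ▸ hw))
    _ = (b - a) * ∫ w in a..b, ‖deriv f w‖ := by
        rw [abs_of_nonneg (sub_nonneg.2 hab), mul_comm]

variable {a η : ℝ}

lemma summable_and_norm_riemannSum_sub_integral_Ioi_le (hη : 0 < η)
    (hd : ∀ w, a ≤ w → DifferentiableAt ℝ f w) (hf : IntegrableOn f (Ioi a))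
    (hf' : IntegrableOn (deriv f) (Ioi a)) :
    Summable (fun k : ℕ => f (a + (k + 1) * η)) ∧
      ‖η • (∑' k : ℕ, f (a + (k + 1) * η)) - ∫ w in Ioi a, f w‖
        ≤ η * ∫ w in Ioi a, ‖deriv f w‖ := by
  set b : ℕ → ℝ := fun k => a + k * η with hb
  have hb0 : b 0 = a := by simp [hb]
  have hb_succ : ∀ k : ℕ, b (k + 1) = a + (k + 1) * η := fun k => by simp [hb]
  have hmesh : ∀ k, b (k + 1) - b k = η := fun k => by rw [hb_succ, hb]; ring
  have hmono : Monotone b := monotone_nat_of_le_succ fun k => by linarith [hmesh k]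
  have htop : Tendsto b atTop atTop :=
    tendsto_atTop_add_const_left _ _ (tendsto_natCast_atTop_atTop.atTop_mul_const hη)
  have hle : ∀ k, a ≤ b k := fun k => hb0 ▸ hmono (Nat.zero_le k)
  rw [← hb0] at hf hf'
  have hcell := hasSum_intervalIntegral_Ioi hmono htop hf
  have hcell' := (hasSum_intervalIntegral_Ioi hmono htop hf'.norm).mul_left η
  have herr : ∀ k, ‖η • f (b (k + 1)) - ∫ w in b k..b (k + 1), f w‖
      ≤ η * ∫ w in b k..b (k + 1), ‖deriv f w‖ := fun k => by
    have h := norm_smul_sub_intervalIntegral_le (hmono k.le_succ)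
      (fun w hw => hd w ((hle k).trans hw.1))
      ((intervalIntegrable_iff_integrableOn_Ioc_of_le (hmono k.le_succ)).2
        (hf'.mono_set fun w hw => (hmono (Nat.zero_le k)).trans_lt hw.1))
    rwa [Nat.succ_eq_add_one, hmesh] at h
  have hsum_smul : Summable fun k => η • f (b (k + 1)) := by
    simpa using (Summable.of_norm_bounded hcell'.summable herr).add hcell.summable
  have hsum : Summable fun k => f (b (k + 1)) := by
    simpa only [inv_smul_smul₀ hη.ne'] using hsum_smul.const_smul η⁻¹
  have hbound := tsum_of_norm_bounded hcell' herr
  rw [hsum_smul.tsum_sub hcell.summable, hcell.tsum_eq, hsum.tsum_const_smul, hb0] at hbound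
  simp only [hb_succ] at hsum hbound
  exact ⟨hsum, hbound⟩

lemma norm_riemannSum_sub_integral_Ioi_zero_le (hη : 0 < η)
    (hd : ∀ w, 0 < w → DifferentiableAt ℝ f w) (hf : IntegrableOn f (Ioi 0))
    (hf' : IntegrableOn (deriv f) (Ioi η)) :
    ‖η • (∑' k : ℕ, f ((k + 1) * η)) - ∫ w in Ioi 0, f w‖
      ≤ η * ‖f η‖ + (∫ w in Ioc 0 η, ‖f w‖) + η * ∫ w in Ioi η, ‖deriv f w‖ := by
  have hfη : IntegrableOn f (Ioi η) := hf.mono_set (Ioi_subset_Ioi hη.le)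
  obtain ⟨hsum, htail⟩ := summable_and_norm_riemannSum_sub_integral_Ioi_le hη
    (fun w hw => hd w (hη.trans_le hw)) hfη hf'
  have hshift : ∀ k : ℕ, ((k + 1 : ℕ) + 1 : ℝ) * η = η + (k + 1) * η := fun k => by
    push_cast; ring
  have hseries : ∑' k : ℕ, f ((k + 1) * η) = f η + ∑' k : ℕ, f (η + (k + 1) * η) := by
    rw [((summable_nat_add_iff (f := fun k : ℕ => f ((k + 1) * η)) 1).1
      (by simpa only [hshift] using hsum)).tsum_eq_zero_add]
    simp only [hshift, Nat.cast_zero, zero_add, one_mul]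
  have hsplit : ∫ w in Ioi 0, f w = (∫ w in Ioc 0 η, f w) + ∫ w in Ioi η, f w := by
    rw [← setIntegral_union (Ioc_disjoint_Ioi le_rfl) measurableSet_Ioi
      (hf.mono_set Ioc_subset_Ioi_self) hfη, Ioc_union_Ioi_eq_Ioi hη.le]
  rw [hseries, hsplit, smul_add, add_sub_add_comm]
  refine (norm_add_le _ _).trans (add_le_add ((norm_sub_le _ _).trans ?_) htail)
  rw [norm_smul, Real.norm_of_nonneg hη.le]
  exact add_le_add_right (norm_integral_le_integral_norm _) _

lemma norm_riemannSum_sub_integral_le_of_norm_le_rpow {α A B : ℝ} (hα : α ∈ Ioo (0 : ℝ) 1)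
    (hη : 0 < η) (hd : ∀ w, 0 < w → DifferentiableAt ℝ f w) (hf : IntegrableOn f (Ioi 0))
    (hA : ∀ w, 0 < w → ‖f w‖ ≤ A * w ^ (-α))
    (hB : ∀ w, 0 < w → ‖deriv f w‖ ≤ B * w ^ (-α - 1)) :
    ‖η • (∑' k : ℕ, f ((k + 1) * η)) - ∫ w in Ioi 0, f w‖
      ≤ (A + A / (1 - α) + B / α) * η ^ (1 - α) := by
  obtain ⟨hα0, hα1⟩ := hα
  have hpow : η * η ^ (-α) = η ^ (1 - α) := by
    rw [← Real.rpow_one_add' hη.le (by linarith), ← sub_eq_add_neg]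
  have hhead : IntegrableOn (fun w : ℝ => A * w ^ (-α)) (Ioc 0 η) :=
    ((intervalIntegrable_iff_integrableOn_Ioc_of_le hη.le).1
      (intervalIntegral.intervalIntegrable_rpow' (by linarith))).const_mul A
  have htail : IntegrableOn (fun w : ℝ => B * w ^ (-α - 1)) (Ioi η) :=
    (integrableOn_Ioi_rpow_of_lt (by linarith) hη).const_mul B
  have hf' : IntegrableOn (deriv f) (Ioi η) := by
    refine htail.mono' (aestronglyMeasurable_deriv f _) ?_
    filter_upwards [ae_restrict_mem measurableSet_Ioi] with w hw using hB w (hη.trans hw)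
  have hfirst : η * ‖f η‖ ≤ A * η ^ (1 - α) :=
    (mul_le_mul_of_nonneg_left (hA η hη) hη.le).trans_eq (by rw [mul_left_comm, hpow])
  have hhead_le : ∫ w in Ioc 0 η, ‖f w‖ ≤ A / (1 - α) * η ^ (1 - α) := calc
    ∫ w in Ioc 0 η, ‖f w‖ ≤ ∫ w in Ioc 0 η, A * w ^ (-α) :=
      setIntegral_mono_on (hf.mono_set Ioc_subset_Ioi_self).norm hhead measurableSet_Ioc
        fun w hw => hA w hw.1
    _ = A / (1 - α) * η ^ (1 - α) := by
      rw [integral_const_mul, ← intervalIntegral.integral_of_le hη.le,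
        integral_rpow (Or.inl (by linarith)), neg_add_eq_sub, Real.zero_rpow (by linarith)]
      ring
  have htail_le : η * ∫ w in Ioi η, ‖deriv f w‖ ≤ B / α * η ^ (1 - α) := calc
    η * ∫ w in Ioi η, ‖deriv f w‖ ≤ η * ∫ w in Ioi η, B * w ^ (-α - 1) :=
      mul_le_mul_of_nonneg_left (setIntegral_mono_on hf'.norm htail measurableSet_Ioi
        fun w hw => hB w (hη.trans hw)) hη.le
    _ = B / α * η ^ (1 - α) := by
      rw [integral_const_mul, integral_Ioi_rpow_of_lt (by linarith) hη, sub_add_cancel,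
        neg_div_neg_eq, ← hpow]
      ring
  refine (norm_riemannSum_sub_integral_Ioi_zero_le hη hd hf hf').trans ?_
  linarith

end RiemannSum

/-! ### The symmetrized fractional Laplacian -/

lemma setOf_le_abs_eq_Ici_union_Iic (ε : ℝ) : {w : ℝ | ε ≤ |w|} = Ici ε ∪ Iic (-ε) := by
  ext w
  simp [le_abs, le_neg]

lemma integrableOn_abs_rpow_of_lt {r ε : ℝ} (hr : r < -1) (hε : 0 < ε) :
    IntegrableOn (fun w : ℝ => |w| ^ r) {w | ε ≤ |w|} := by
  have hpos : IntegrableOn (fun w : ℝ => |w| ^ r) (Ici ε) :=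
    ((integrableOn_Ici_iff_integrableOn_Ioi (by finiteness)).2
      (integrableOn_Ioi_rpow_of_lt hr hε)).congr_fun
      (fun w hw => by simp only [abs_of_pos (hε.trans_le hw)]) measurableSet_Ici
  rw [setOf_le_abs_eq_Ici_union_Iic]
  exact hpos.union (by simpa using hpos.comp_neg)

lemma setIntegral_le_abs_eq_integral_Ioi_add_neg {E : Type*} [NormedAddCommGroup E]
    [NormedSpace ℝ E] {k : ℝ → E} {ε : ℝ} (hε : 0 < ε) (hk : IntegrableOn k {w | ε ≤ |w|}) :
    ∫ w in {w | ε ≤ |w|}, k w = ∫ w in Ioi ε, (k w + k (-w)) := by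
  rw [setOf_le_abs_eq_Ici_union_Iic] at hk ⊢
  have hpos : IntegrableOn k (Ioi ε) := hk.left_of_union.mono_set Ioi_subset_Ici_self
  have hneg : IntegrableOn (fun w => k (-w)) (Ioi ε) := by
    simpa using (hk.right_of_union.mono_set Iio_subset_Iic_self).comp_neg
  have hdisj : Disjoint (Ici ε) (Iic (-ε)) :=
    Set.disjoint_left.2 fun w (hw : ε ≤ w) (hw' : w ≤ -ε) => by linarith
  rw [setIntegral_union hdisj measurableSet_Iic hk.left_of_union hk.right_of_union,
    integral_Ici_eq_integral_Ioi, ← integral_comp_neg_Ioi, ← integral_add hpos hneg]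

/-- The symmetric second difference of `g` at `u`, as a function of the step `w`. -/
def secondDiff (g : ℝ → ℝ) (u w : ℝ) : ℝ := g (u + w) + g (u - w) - 2 * g u

/-- The integrand on `(0, ∞)` obtained from the singular integral defining the fractional
Laplacian by adding the contributions of the steps `w` and `-w`; this cancels the first-order term
of `g` at `u` and makes the integral absolutely convergent at `0`. -/
noncomputable def levyIntegrand (γ : ℝ) (g : ℝ → ℝ) (u w : ℝ) : ℝ :=
  secondDiff g u w * w ^ (-γ - 1)

lemma fracLapTrunc_eq_integral_levyIntegrand {γ : ℝ} (c : ℝ) (hγ : 0 < γ) {g : ℝ → ℝ}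
    (hg : Measurable g) {A : ℝ} (hA : ∀ v, |g v| ≤ A) {ε : ℝ} (hε : 0 < ε) (u : ℝ) :
    fracLapTrunc c γ g ε u = c * ∫ w in Ioi ε, levyIntegrand γ g u w := by
  have hpow : ∀ w r : ℝ, r / |w| ^ (γ + 1) = r * |w| ^ (-γ - 1) := fun w r => by
    rw [div_eq_mul_inv, ← Real.rpow_neg (abs_nonneg w), neg_add']
  have hint : IntegrableOn (fun w => (g (u + w) - g u) * |w| ^ (-γ - 1)) {w | ε ≤ |w|} :=
    (integrableOn_abs_rpow_of_lt (by linarith) hε).bdd_mul (c := A + A)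
      (Measurable.aestronglyMeasurable (by fun_prop))
      (Eventually.of_forall fun w => (norm_sub_le _ _).trans (add_le_add (hA _) (hA u)))
  have htranslate : ∫ v in {v : ℝ | ε ≤ |u - v|}, (g v - g u) / |u - v| ^ (γ + 1)
      = ∫ w in {w : ℝ | ε ≤ |w|}, (g (u + w) - g u) * |w| ^ (-γ - 1) := by
    rw [← (measurePreserving_add_left volume u).setIntegral_preimage_emb
      (measurableEmbedding_addLeft u)]
    simp [hpow]
  rw [fracLapTrunc, htranslate, setIntegral_le_abs_eq_integral_Ioi_add_neg hε hint]
  congr 1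
  refine setIntegral_congr_fun measurableSet_Ioi fun w (hw : ε < w) => ?_
  simp only [abs_neg, abs_of_pos (hε.trans hw), levyIntegrand, secondDiff, ← sub_eq_add_neg]
  ring

lemma fracLap_eq_integral_levyIntegrand {γ : ℝ} (c : ℝ) (hγ : 0 < γ) {g : ℝ → ℝ}
    (hg : Measurable g) {A : ℝ} (hA : ∀ v, |g v| ≤ A) {u : ℝ}
    (hint : IntegrableOn (levyIntegrand γ g u) (Ioi 0)) :
    fracLap c γ g u = c * ∫ w in Ioi 0, levyIntegrand γ g u w := by
  have hlim := ((aecover_Ioi_of_Ioi (μ := volume) (tendsto_id.mono_left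
    (nhdsWithin_le_nhds (a := (0 : ℝ)) (s := Ioi 0)))).integral_tendsto_of_countably_generated
    hint).const_mul c
  refine (hlim.congr' ?_).limUnder_eq
  filter_upwards [self_mem_nhdsWithin] with ε (hε : 0 < ε)
  rw [fracLapTrunc_eq_integral_levyIntegrand c hγ hg hA hε, id,
    Measure.restrict_restrict measurableSet_Ioi, inter_eq_left.2 (Ioi_subset_Ioi hε.le)]

/-! ### The discrete generator as a Riemann sum -/

lemma summable_transP {γ : ℝ} (c : ℝ) (hγ : 0 < γ) : Summable (transP c γ) := by
  refine ((Real.summable_abs_int_rpow (by linarith : 1 < γ + 1)).mul_left c).congr_cofinite ?_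
  filter_upwards [(Set.finite_singleton (0 : ℤ)).compl_mem_cofinite] with z (hz : z ≠ 0)
  rw [transP, if_neg hz, neg_add']

lemma transP_natCast_succ (c γ : ℝ) (k : ℕ) :
    transP c γ (k + 1 : ℕ) = c * (k + 1 : ℝ) ^ (-γ - 1) := by
  rw [transP, if_neg (by positivity), Int.cast_natCast, Nat.abs_cast, Nat.cast_succ]

lemma transP_neg (c γ : ℝ) (z : ℤ) : transP c γ (-z) = transP c γ z := by
  simp only [transP, neg_eq_zero, Int.cast_neg, abs_neg]

lemma tsum_int_eq_zero_add_tsum_nat_succ {E : Type*} [AddCommGroup E] [TopologicalSpace E]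
    [IsTopologicalAddGroup E] [T2Space E] {F : ℤ → E} (hF : Summable F) :
    ∑' z, F z = F 0 + ∑' k : ℕ, (F (k + 1 : ℕ) + F (-(k + 1 : ℕ))) := by
  have h := (hasSum_nat_add_iff' 1).2 hF.hasSum.nat_add_neg
  rw [h.tsum_eq]
  simp

lemma tsum_sub_mul_transP_eq_tsum_levyIntegrand {γ η : ℝ} (c : ℝ) (hγ : 0 < γ) (hη : 0 < η)
    {g : ℝ → ℝ} {A : ℝ} (hA : ∀ v, |g v| ≤ A) (u : ℝ) :
    ∑' z : ℤ, (g (u + z * η) - g u) * transP c γ z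
      = c * η ^ γ * (η * ∑' k : ℕ, levyIntegrand γ g u ((k + 1) * η)) := by
  have hsum : Summable fun z : ℤ => (g (u + z * η) - g u) * transP c γ z := by
    refine .of_norm_bounded ((summable_transP c hγ).norm.mul_left (A + A)) fun z => ?_
    rw [norm_mul]
    exact mul_le_mul_of_nonneg_right ((norm_sub_le _ _).trans (add_le_add (hA _) (hA u)))
      (norm_nonneg _)
  have hscale : ∀ k : ℕ, ((k : ℝ) + 1) ^ (-γ - 1) = η ^ γ * η * (((k : ℝ) + 1) * η) ^ (-γ - 1) :=
    fun k => by
      rw [Real.mul_rpow (by positivity) hη.le, ← Real.rpow_add_one hη.ne', mul_left_comm,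
        ← Real.rpow_add hη, ← add_sub_assoc]
      simp
  rw [tsum_int_eq_zero_add_tsum_nat_succ hsum, ← mul_assoc, ← tsum_mul_left]
  simp only [transP_neg, transP_natCast_succ, hscale, levyIntegrand, secondDiff, Int.cast_zero,
    zero_mul, add_zero, sub_self, zero_add]
  refine tsum_congr fun k => ?_
  push_cast
  ring_nf

lemma rpow_mul_tsum_transP_eq_tsum_levyIntegrand {γ : ℝ} (c : ℝ) (hγ : 0 < γ) {g : ℝ → ℝ} {A : ℝ}
    (hA : ∀ v, |g v| ≤ A) {n : ℕ} (hn : 0 < n) (x : ℤ) :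
    (n : ℝ) ^ γ * ∑' y : ℤ, (g (y / n) - g (x / n)) * transP c γ (y - x)
      = c * ((n : ℝ)⁻¹ * ∑' k : ℕ, levyIntegrand γ g (x / n) ((k + 1) * (n : ℝ)⁻¹)) := by
  have hn0 : (0 : ℝ) < n := Nat.cast_pos.2 hn
  have hshift : ∑' y : ℤ, (g (y / n) - g (x / n)) * transP c γ (y - x)
      = ∑' z : ℤ, (g (x / n + z * (n : ℝ)⁻¹) - g (x / n)) * transP c γ z := by
    rw [← (Equiv.addLeft x).tsum_eq]
    simp [add_mul, div_eq_mul_inv]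
  rw [hshift, tsum_sub_mul_transP_eq_tsum_levyIntegrand c hγ (inv_pos.2 hn0) hA,
    Real.inv_rpow hn0.le, mul_assoc c, mul_left_comm, mul_inv_cancel_left₀ (by positivity)]

/-! ### Uniform estimates for compactly supported `C^{1,1}` functions -/

/-- The class of `C^{1,1}` functions supported in `[-M, M]` whose derivative is `K`-Lipschitz. Every
error constant below depends on the function through `K` and `M` only, which is what makes the
estimates uniform over families of functions. -/
structure IsC11TestFunction (K M : ℝ≥0) (g : ℝ → ℝ) : Prop where
  differentiable : Differentiable ℝ g
  lipschitzWith_deriv : LipschitzWith K (deriv g)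
  eq_zero : ∀ v, (M : ℝ) < |v| → g v = 0

/-- A common bound, on `IsC11TestFunction K M`, for the second difference and its derivative in the
step `w`, as well as for their quotients by `w ^ 2` and `w` respectively. -/
def secondDiffBound (K M : ℝ≥0) : ℝ := 4 * K * (2 * M + 1) ^ 2

lemma secondDiffBound_nonneg (K M : ℝ≥0) : 0 ≤ secondDiffBound K M := by
  unfold secondDiffBound
  positivity

lemma le_mul_rpow_of_le_of_le_mul_rpow {a B w p θ : ℝ} (hB : 0 ≤ B) (hw : 0 < w)
    (hθ : θ ∈ Icc 0 p) (h0 : a ≤ B) (hp : a ≤ B * w ^ p) : a ≤ B * w ^ θ := by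
  rcases le_total w 1 with hw1 | hw1
  · exact hp.trans (mul_le_mul_of_nonneg_left
      (Real.rpow_le_rpow_of_exponent_ge hw hw1 hθ.2) hB)
  · exact h0.trans (le_mul_of_one_le_right hB (Real.one_le_rpow hw1 hθ.1))

lemma abs_sub_add_one_le {v M : ℝ} (hv : |v| ≤ M) : |v - (M + 1)| ≤ 2 * M + 1 := by
  rw [abs_le] at hv ⊢
  constructor <;> linarith

lemma lt_abs_add_and_lt_abs_sub {M u w : ℝ} (hw : 0 ≤ w)
    (hwu : w ∉ Icc (|u| - M) (|u| + M)) : M < |u + w| ∧ M < |u - w| := by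
  rw [mem_Icc, not_and_or, not_le, not_le] at hwu
  constructor <;> rcases hwu with h | h <;> rcases abs_cases u with ⟨hu', _⟩ | ⟨hu', _⟩ <;>
    rw [hu'] at h <;> first
      | exact lt_abs.2 (Or.inl (by linarith))
      | exact lt_abs.2 (Or.inr (by linarith))

namespace IsC11TestFunction

variable {K M : ℝ≥0} {g : ℝ → ℝ}

lemma deriv_eq_zero (hg : IsC11TestFunction K M g) {v : ℝ} (hv : (M : ℝ) < |v|) :
    deriv g v = 0 := by
  have hzero : g =ᶠ[𝓝 v] fun _ => 0 :=
    (continuous_abs.continuousAt.eventually_const_lt hv).mono hg.eq_zero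
  rw [hzero.deriv_eq, deriv_const]

lemma abs_deriv_le (hg : IsC11TestFunction K M g) (v : ℝ) : |deriv g v| ≤ K * (2 * M + 1) := by
  rcases le_or_gt |v| M with hv | hv
  · have h := hg.lipschitzWith_deriv.dist_le_mul v (M + 1)
    rw [hg.deriv_eq_zero ((lt_add_one (M : ℝ)).trans_le (le_abs_self _)), dist_zero_right,
      Real.norm_eq_abs, Real.dist_eq] at h
    exact h.trans (mul_le_mul_of_nonneg_left (abs_sub_add_one_le hv) K.coe_nonneg)
  · rw [hg.deriv_eq_zero hv, abs_zero]
    positivity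

lemma abs_apply_le (hg : IsC11TestFunction K M g) (v : ℝ) : |g v| ≤ K * (2 * M + 1) ^ 2 := by
  rcases le_or_gt |v| M with hv | hv
  · have h := convex_univ.norm_image_sub_le_of_norm_deriv_le
      (fun w _ => hg.differentiable w) (fun w _ => hg.abs_deriv_le w)
      (mem_univ ((M : ℝ) + 1)) (mem_univ v)
    rw [hg.eq_zero _ ((lt_add_one (M : ℝ)).trans_le (le_abs_self _)), sub_zero] at h
    refine h.trans ((mul_le_mul_of_nonneg_left (abs_sub_add_one_le hv)
      (by positivity)).trans_eq (by ring))
  · rw [hg.eq_zero v hv, abs_zero]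
    positivity

lemma hasDerivAt_secondDiff (hg : IsC11TestFunction K M g) (u w : ℝ) :
    HasDerivAt (secondDiff g u) (deriv g (u + w) - deriv g (u - w)) w := by
  have hadd := (hg.differentiable (u + w)).hasDerivAt.comp_const_add u w
  have hsub := (hg.differentiable (u - w)).hasDerivAt.comp_const_sub u w
  exact ((hadd.add hsub).sub_const (2 * g u)).congr_deriv (sub_eq_add_neg _ _).symm

lemma abs_deriv_sub_deriv_le (hg : IsC11TestFunction K M g) (u : ℝ) {w θ : ℝ} (hw : 0 < w)
    (hθ : θ ∈ Icc (0 : ℝ) 1) :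
    |deriv g (u + w) - deriv g (u - w)| ≤ secondDiffBound K M * w ^ θ := by
  have hM : (1 : ℝ) ≤ 2 * M + 1 := by linarith [M.coe_nonneg]
  have hK : (K : ℝ) * (2 * M + 1) ≤ K * (2 * M + 1) ^ 2 :=
    mul_le_mul_of_nonneg_left (le_self_pow₀ hM two_ne_zero) K.coe_nonneg
  have hK' : (K : ℝ) ≤ K * (2 * M + 1) := le_mul_of_one_le_right K.coe_nonneg hM
  refine le_mul_rpow_of_le_of_le_mul_rpow (secondDiffBound_nonneg K M) hw hθ ?_ ?_
  · refine (abs_sub _ _).trans ?_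
    unfold secondDiffBound
    linarith [hg.abs_deriv_le (u + w), hg.abs_deriv_le (u - w), K.coe_nonneg]
  · have h := hg.lipschitzWith_deriv.dist_le_mul (u + w) (u - w)
    rw [Real.dist_eq, Real.dist_eq, add_sub_sub_cancel, abs_of_pos (add_pos hw hw)] at h
    rw [Real.rpow_one]
    refine h.trans ((by ring : (K : ℝ) * (w + w) = 2 * K * w).trans_le ?_)
    refine mul_le_mul_of_nonneg_right ?_ hw.le
    unfold secondDiffBound
    linarith [K.coe_nonneg]

lemma abs_secondDiff_le (hg : IsC11TestFunction K M g) (u : ℝ) {w θ : ℝ} (hw : 0 < w)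
    (hθ : θ ∈ Icc (0 : ℝ) 2) : |secondDiff g u w| ≤ secondDiffBound K M * w ^ θ := by
  refine le_mul_rpow_of_le_of_le_mul_rpow (secondDiffBound_nonneg K M) hw hθ ?_ ?_
  · have h₁ := abs_sub (g (u + w) + g (u - w)) (2 * g u)
    have h₂ := abs_add_le (g (u + w)) (g (u - w))
    rw [abs_mul, abs_two] at h₁
    unfold secondDiff secondDiffBound
    linarith [hg.abs_apply_le u, hg.abs_apply_le (u + w), hg.abs_apply_le (u - w)]
  · have hbound : ∀ t ∈ Ico 0 w, ‖deriv g (u + t) - deriv g (u - t)‖ ≤ secondDiffBound K M * w := by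
      rintro t ⟨ht, htw⟩
      rcases ht.eq_or_lt with rfl | ht
      · simpa using mul_nonneg (secondDiffBound_nonneg K M) hw.le
      · refine (hg.abs_deriv_sub_deriv_le u ht ⟨zero_le_one, le_rfl⟩).trans ?_
        rw [Real.rpow_one]
        exact mul_le_mul_of_nonneg_left htw.le (secondDiffBound_nonneg K M)
    have h := norm_image_sub_le_of_norm_deriv_le_segment'
      (fun t _ => (hg.hasDerivAt_secondDiff u t).hasDerivWithinAt) hbound w ⟨hw.le, le_rfl⟩
    have hzero : secondDiff g u 0 = 0 := by simp [secondDiff, two_mul]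
    rw [hzero, sub_zero, sub_zero, Real.norm_eq_abs] at h
    rwa [Real.rpow_two, sq, ← mul_assoc]

section LevyIntegrand

variable {γ θ w : ℝ}

lemma abs_levyIntegrand_le (hg : IsC11TestFunction K M g) (u : ℝ) (hw : 0 < w)
    (hθ : θ ∈ Icc (0 : ℝ) 2) :
    |levyIntegrand γ g u w| ≤ secondDiffBound K M * w ^ (θ - γ - 1) := by
  have hpow : w ^ (θ - γ - 1) = w ^ θ * w ^ (-γ - 1) := by
    rw [← Real.rpow_add hw]; ring_nf
  rw [levyIntegrand, abs_mul, Real.abs_rpow_of_nonneg hw.le, abs_of_pos hw, hpow, ← mul_assoc]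
  exact mul_le_mul_of_nonneg_right (hg.abs_secondDiff_le u hw hθ) (Real.rpow_nonneg hw.le _)

lemma hasDerivAt_levyIntegrand (hg : IsC11TestFunction K M g) (u : ℝ) (hw : 0 < w) :
    HasDerivAt (levyIntegrand γ g u)
      ((deriv g (u + w) - deriv g (u - w)) * w ^ (-γ - 1)
        + secondDiff g u w * ((-γ - 1) * w ^ (-γ - 1 - 1))) w :=
  (hg.hasDerivAt_secondDiff u w).mul (Real.hasDerivAt_rpow_const (Or.inl hw.ne'))

lemma abs_deriv_levyIntegrand_le (hg : IsC11TestFunction K M g) (hγ : γ ∈ Ioo (0 : ℝ) 2) (u : ℝ)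
    (hw : 0 < w) (hθ : θ ∈ Icc (0 : ℝ) 1) :
    |deriv (levyIntegrand γ g u) w| ≤ 4 * secondDiffBound K M * w ^ (θ - γ - 1) := by
  have hpow : w ^ (θ - γ - 1) = w ^ θ * w ^ (-γ - 1) := by
    rw [← Real.rpow_add hw]; ring_nf
  have hpow' : w ^ (θ - γ - 1) = w ^ (θ + 1) * w ^ (-γ - 1 - 1) := by
    rw [← Real.rpow_add hw]; ring_nf
  have hfirst : |(deriv g (u + w) - deriv g (u - w)) * w ^ (-γ - 1)|
      ≤ secondDiffBound K M * w ^ (θ - γ - 1) := by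
    rw [abs_mul, Real.abs_rpow_of_nonneg hw.le, abs_of_pos hw, hpow, ← mul_assoc]
    exact mul_le_mul_of_nonneg_right (hg.abs_deriv_sub_deriv_le u hw hθ)
      (Real.rpow_nonneg hw.le _)
  have hsecond : |secondDiff g u w * ((-γ - 1) * w ^ (-γ - 1 - 1))|
      ≤ (γ + 1) * (secondDiffBound K M * w ^ (θ - γ - 1)) := by
    have hθ' : θ + 1 ∈ Icc (0 : ℝ) 2 := ⟨by linarith [hθ.1], by linarith [hθ.2]⟩
    rw [abs_mul, abs_mul, Real.abs_rpow_of_nonneg hw.le, abs_of_pos hw,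
      abs_of_nonpos (by linarith [hγ.1] : -γ - 1 ≤ 0), hpow', neg_sub, sub_neg_eq_add,
      add_comm 1 γ, mul_left_comm, ← mul_assoc (secondDiffBound K M)]
    exact mul_le_mul_of_nonneg_left (mul_le_mul_of_nonneg_right (hg.abs_secondDiff_le u hw hθ')
      (Real.rpow_nonneg hw.le _)) (by linarith [hγ.1])
  have hnonneg : 0 ≤ secondDiffBound K M * w ^ (θ - γ - 1) :=
    mul_nonneg (secondDiffBound_nonneg K M) (Real.rpow_nonneg hw.le _)
  rw [(hg.hasDerivAt_levyIntegrand u hw).deriv]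
  refine (abs_add_le _ _).trans ((add_le_add hfirst hsecond).trans ?_)
  nlinarith [hγ.2]

lemma integrableOn_levyIntegrand (hg : IsC11TestFunction K M g) (hγ : γ ∈ Ioo (0 : ℝ) 2) (u : ℝ) :
    IntegrableOn (levyIntegrand γ g u) (Ioi 0) := by
  have hmeas : Measurable (levyIntegrand γ g u) := by
    have := hg.differentiable.continuous.measurable
    unfold levyIntegrand secondDiff
    fun_prop
  have hnear : IntegrableOn (levyIntegrand γ g u) (Ioc 0 1) := by
    refine Integrable.mono' (((intervalIntegrable_iff_integrableOn_Ioc_of_le zero_le_one).1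
      (intervalIntegral.intervalIntegrable_rpow' (by linarith [hγ.2] : -1 < 2 - γ - 1))).const_mul
        (secondDiffBound K M)) hmeas.aestronglyMeasurable ?_
    filter_upwards [ae_restrict_mem measurableSet_Ioc] with w hw
    exact hg.abs_levyIntegrand_le u hw.1 ⟨zero_le_two, le_rfl⟩
  have hfar : IntegrableOn (levyIntegrand γ g u) (Ioi 1) := by
    refine Integrable.mono' ((integrableOn_Ioi_rpow_of_lt (by linarith [hγ.1] : 0 - γ - 1 < -1)
      one_pos).const_mul (secondDiffBound K M)) hmeas.aestronglyMeasurable ?_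
    filter_upwards [ae_restrict_mem measurableSet_Ioi] with w hw
    exact hg.abs_levyIntegrand_le u (one_pos.trans hw) ⟨le_rfl, zero_le_two⟩
  rw [← Ioc_union_Ioi_eq_Ioi zero_le_one]
  exact hnear.union hfar

lemma integrableOn_deriv_levyIntegrand (hg : IsC11TestFunction K M g) (hγ : γ ∈ Ioo (0 : ℝ) 2)
    (u : ℝ) {η : ℝ} (hη : 0 < η) : IntegrableOn (deriv (levyIntegrand γ g u)) (Ioi η) := by
  refine Integrable.mono' ((integrableOn_Ioi_rpow_of_lt (by linarith [hγ.1] : 0 - γ - 1 < -1)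
    hη).const_mul (4 * secondDiffBound K M)) (aestronglyMeasurable_deriv _ _) ?_
  filter_upwards [ae_restrict_mem measurableSet_Ioi] with w hw
  exact hg.abs_deriv_levyIntegrand_le hγ u (hη.trans hw) ⟨le_rfl, zero_le_one⟩

lemma norm_riemannSum_levyIntegrand_sub_integral_le (hg : IsC11TestFunction K M g)
    (hγ : γ ∈ Ioo (0 : ℝ) 2) (u : ℝ) {η : ℝ} (hη : 0 < η) :
    ‖η • (∑' k : ℕ, levyIntegrand γ g u ((k + 1) * η)) - ∫ w in Ioi 0, levyIntegrand γ g u w‖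
      ≤ (secondDiffBound K M + secondDiffBound K M / (1 - γ / 2)
          + 4 * secondDiffBound K M / (γ / 2)) * η ^ (1 - γ / 2) := by
  obtain ⟨hγ0, hγ2⟩ := hγ
  -- These interpolation exponents keep the singularity `w ^ (-γ/2)` integrable for every `γ < 2`.
  refine norm_riemannSum_sub_integral_le_of_norm_le_rpow ⟨by linarith, by linarith⟩ hη
    (fun w hw => (hg.hasDerivAt_levyIntegrand u hw).differentiableAt)
    (hg.integrableOn_levyIntegrand ⟨hγ0, hγ2⟩ u) (fun w hw => ?_) (fun w hw => ?_)
  · have h := hg.abs_levyIntegrand_le (γ := γ) (θ := 1 + γ / 2) u hw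
      ⟨by linarith, by linarith⟩
    rwa [show 1 + γ / 2 - γ - 1 = -(γ / 2) by ring] at h
  · have h := hg.abs_deriv_levyIntegrand_le (θ := γ / 2) ⟨hγ0, hγ2⟩ u hw
      ⟨by linarith, by linarith⟩
    rwa [show γ / 2 - γ - 1 = -(γ / 2) - 1 by ring] at h

lemma secondDiff_eq_zero (hg : IsC11TestFunction K M g) {u : ℝ} (hu : (M : ℝ) < |u|) (hw : 0 ≤ w)
    (hwu : w ∉ Icc (|u| - M) (|u| + M)) : secondDiff g u w = 0 := by
  obtain ⟨hadd, hsub⟩ := lt_abs_add_and_lt_abs_sub hw hwu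
  simp [secondDiff, hg.eq_zero _ hadd, hg.eq_zero _ hsub, hg.eq_zero _ hu]

lemma deriv_levyIntegrand_eq_zero (hg : IsC11TestFunction K M g) {u : ℝ} (hu : (M : ℝ) < |u|)
    (hw : 0 < w) (hwu : w ∉ Icc (|u| - M) (|u| + M)) : deriv (levyIntegrand γ g u) w = 0 := by
  obtain ⟨hadd, hsub⟩ := lt_abs_add_and_lt_abs_sub hw.le hwu
  rw [(hg.hasDerivAt_levyIntegrand u hw).deriv, hg.deriv_eq_zero hadd, hg.deriv_eq_zero hsub,
    hg.secondDiff_eq_zero hu hw.le hwu]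
  ring

lemma integral_norm_deriv_levyIntegrand_le (hg : IsC11TestFunction K M g)
    (hγ : γ ∈ Ioo (0 : ℝ) 2) {u η : ℝ} (hη : 0 < η) (hu : M + η < |u|) :
    ∫ w in Ioi η, ‖deriv (levyIntegrand γ g u) w‖
      ≤ 4 * secondDiffBound K M * (|u| - M) ^ (-γ - 1) * (2 * M) := by
  have hsub : Icc (|u| - M) (|u| + M) ⊆ Ioi η := fun w hw =>
    (lt_sub_iff_add_lt'.2 hu).trans_le hw.1
  have hpos : 0 < |u| - M := by linarith
  rw [setIntegral_eq_of_subset_of_forall_sdiff_eq_zero measurableSet_Ioi hsub fun w hw => by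
    rw [hg.deriv_levyIntegrand_eq_zero (by linarith) (hη.trans hw.1) hw.2, norm_zero]]
  refine (Real.le_norm_self _).trans ((norm_setIntegral_le_of_norm_le_const
    (C := 4 * secondDiffBound K M * (|u| - M) ^ (-γ - 1)) measure_Icc_lt_top
    fun w hw => ?_).trans_eq ?_)
  · have h := hg.abs_deriv_levyIntegrand_le hγ u (hη.trans (hsub hw)) ⟨le_rfl, zero_le_one⟩
    rw [zero_sub] at h
    rw [norm_norm]
    refine h.trans (mul_le_mul_of_nonneg_left
      (Real.rpow_le_rpow_of_nonpos hpos hw.1 (by linarith [hγ.1])) ?_)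
    linarith [secondDiffBound_nonneg K M]
  · rw [Real.volume_real_Icc_of_le (by linarith [M.coe_nonneg])]
    ring

lemma norm_riemannSum_levyIntegrand_sub_integral_le_of_far (hg : IsC11TestFunction K M g)
    (hγ : γ ∈ Ioo (0 : ℝ) 2) {u η : ℝ} (hη : 0 < η) (hu : M + η < |u|) :
    ‖η • (∑' k : ℕ, levyIntegrand γ g u ((k + 1) * η)) - ∫ w in Ioi 0, levyIntegrand γ g u w‖
      ≤ η * (4 * secondDiffBound K M * (|u| - M) ^ (-γ - 1) * (2 * M)) := by
  have hzero : ∀ w ∈ Ioc 0 η, levyIntegrand γ g u w = 0 := fun w hw => by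
    rw [levyIntegrand, hg.secondDiff_eq_zero (by linarith) hw.1.le
      fun h => by linarith [h.1, hw.2], zero_mul]
  have h := norm_riemannSum_sub_integral_Ioi_zero_le hη
    (fun w hw => (hg.hasDerivAt_levyIntegrand (γ := γ) u hw).differentiableAt)
    (hg.integrableOn_levyIntegrand hγ u) (hg.integrableOn_deriv_levyIntegrand hγ u hη)
  have hhead : ∫ w in Ioc 0 η, ‖levyIntegrand γ g u w‖ = 0 :=
    setIntegral_eq_zero_of_forall_eq_zero fun w hw => by rw [hzero w hw, norm_zero]
  rw [hzero η ⟨hη, le_rfl⟩, hhead, norm_zero, mul_zero, add_zero, zero_add] at h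
  exact h.trans (mul_le_mul_of_nonneg_left (hg.integral_norm_deriv_levyIntegrand_le hγ hη hu) hη.le)

end LevyIntegrand

end IsC11TestFunction

lemma exists_norm_riemannSum_levyIntegrand_sub_integral_le {γ : ℝ} (hγ : γ ∈ Ioo (0 : ℝ) 2)
    (K M : ℝ≥0) :
    ∃ C, 0 ≤ C ∧ ∀ g, IsC11TestFunction K M g → ∀ u, ∀ η ∈ Ioc (0 : ℝ) 1,
      ‖η • (∑' k : ℕ, levyIntegrand γ g u ((k + 1) * η)) - ∫ w in Ioi 0, levyIntegrand γ g u w‖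
        ≤ C * (1 + |u|) ^ (-(γ + 1)) * η ^ (1 - γ / 2) := by
  obtain ⟨hγ0, hγ2⟩ := hγ
  set B := secondDiffBound K M
  have hB : 0 ≤ B := secondDiffBound_nonneg K M
  set near := B + B / (1 - γ / 2) + 4 * B / (γ / 2)
  have hnear : 0 ≤ near := by
    have : 0 < 1 - γ / 2 := by linarith
    positivity
  refine ⟨near * (2 * M + 2) ^ (γ + 1) + 8 * B * M * 2 ^ (γ + 1), by positivity,
    fun g hg u η ⟨hη0, hη1⟩ => ?_⟩
  have hu1 : 0 < 1 + |u| := by positivity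
  rw [add_mul, add_mul]
  rcases le_or_gt |u| (2 * M + 1) with hu | hu
  · refine (hg.norm_riemannSum_levyIntegrand_sub_integral_le ⟨hγ0, hγ2⟩ u hη0).trans ?_
    have hone : 1 ≤ (2 * M + 2 : ℝ) ^ (γ + 1) * (1 + |u|) ^ (-(γ + 1)) := by
      rw [Real.rpow_neg hu1.le, ← div_eq_mul_inv, one_le_div (by positivity)]
      exact Real.rpow_le_rpow hu1.le (by linarith) (by linarith)
    refine le_add_of_le_of_nonneg (mul_le_mul_of_nonneg_right ?_ (by positivity)) (by positivity)
    rw [mul_assoc]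
    exact le_mul_of_one_le_right hnear hone
  · refine (hg.norm_riemannSum_levyIntegrand_sub_integral_le_of_far ⟨hγ0, hγ2⟩ hη0
      (by linarith [M.coe_nonneg])).trans (le_add_of_nonneg_of_le (by positivity) ?_)
    have hdecay : (|u| - M) ^ (-γ - 1) ≤ 2 ^ (γ + 1) * (1 + |u|) ^ (-(γ + 1)) := calc
      (|u| - M) ^ (-γ - 1) ≤ ((1 + |u|) / 2) ^ (-γ - 1) :=
        Real.rpow_le_rpow_of_nonpos (by positivity) (by linarith) (by linarith)
      _ = 2 ^ (γ + 1) * (1 + |u|) ^ (-(γ + 1)) := by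
        rw [Real.div_rpow hu1.le zero_le_two, ← neg_add', Real.rpow_neg zero_le_two, div_inv_eq_mul,
          mul_comm]
    have hmesh : η ≤ η ^ (1 - γ / 2) := by
      simpa using Real.rpow_le_rpow_of_exponent_ge hη0 hη1 (by linarith : 1 - γ / 2 ≤ 1)
    calc η * (4 * B * (|u| - M) ^ (-γ - 1) * (2 * M))
        = 8 * B * M * (|u| - M) ^ (-γ - 1) * η := by ring
      _ ≤ 8 * B * M * (2 ^ (γ + 1) * (1 + |u|) ^ (-(γ + 1))) * η ^ (1 - γ / 2) := by gcongr
      _ = 8 * B * M * 2 ^ (γ + 1) * (1 + |u|) ^ (-(γ + 1)) * η ^ (1 - γ / 2) := by ring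

/-! ### Summation over the lattice -/

lemma exists_abs_generator_sub_fracLap_le {γ : ℝ} (hγ : γ ∈ Ioo (0 : ℝ) 2) (c : ℝ)
    (K M : ℝ≥0) :
    ∃ C, 0 ≤ C ∧ ∀ g, IsC11TestFunction K M g → ∀ n : ℕ, 0 < n → ∀ x : ℤ,
      |(n : ℝ) ^ γ * (∑' y : ℤ, (g (y / n) - g (x / n)) * transP c γ (y - x))
          - fracLap c γ g (x / n)|
        ≤ C * (1 + |(x : ℝ) / n|) ^ (-(γ + 1)) * (n : ℝ)⁻¹ ^ (1 - γ / 2) := by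
  obtain ⟨C, hC, h⟩ := exists_norm_riemannSum_levyIntegrand_sub_integral_le hγ K M
  refine ⟨|c| * C, by positivity, fun g hg n hn x => ?_⟩
  rw [rpow_mul_tsum_transP_eq_tsum_levyIntegrand c hγ.1 hg.abs_apply_le hn,
    fracLap_eq_integral_levyIntegrand c hγ.1 hg.differentiable.continuous.measurable
      hg.abs_apply_le (hg.integrableOn_levyIntegrand hγ _), ← mul_sub, abs_mul, mul_assoc |c|,
    mul_assoc |c|]
  exact mul_le_mul_of_nonneg_left (h g hg _ _ ⟨by positivity, Nat.cast_inv_le_one n⟩)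
    (abs_nonneg c)

lemma exists_riemannSum_one_add_rpow_le {b : ℝ} (hb : 1 < b) :
    ∃ C, ∀ η ∈ Ioc (0 : ℝ) 1, Summable (fun k : ℕ => (1 + (k + 1) * η) ^ (-b)) ∧
      η * ∑' k : ℕ, (1 + (k + 1) * η) ^ (-b) ≤ C := by
  have hderiv : ∀ w : ℝ, 0 ≤ w →
      HasDerivAt (fun w : ℝ => (1 + w) ^ (-b)) (-b * (1 + w) ^ (-b - 1)) w := fun w hw =>
    (Real.hasDerivAt_rpow_const (Or.inl (by positivity : 1 + w ≠ 0))).comp_const_add 1 w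
  have hint : ∀ r : ℝ, r < -1 → IntegrableOn (fun w : ℝ => (1 + w) ^ r) (Ioi 0) := fun r hr => by
    simpa only [add_comm] using
      integrableOn_add_rpow_Ioi_of_lt (m := 1) hr (by norm_num : -(1 : ℝ) < 0)
  have hderiv_int : IntegrableOn (deriv fun w : ℝ => (1 + w) ^ (-b)) (Ioi 0) :=
    IntegrableOn.congr_fun ((hint (-b - 1) (by linarith)).const_mul (-b))
      (fun w hw => (hderiv w (le_of_lt hw)).deriv.symm) measurableSet_Ioi
  refine ⟨(∫ w in Ioi 0, (1 + w) ^ (-b)) + ∫ w in Ioi 0, ‖deriv (fun w : ℝ => (1 + w) ^ (-b)) w‖,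
    fun η ⟨hη0, hη1⟩ => ?_⟩
  obtain ⟨hsum, herr⟩ := summable_and_norm_riemannSum_sub_integral_Ioi_le hη0
    (fun w hw => (hderiv w hw).differentiableAt) (hint (-b) (by linarith)) hderiv_int
  simp only [zero_add] at hsum herr
  refine ⟨hsum, ?_⟩
  have hnonneg : 0 ≤ ∫ w in Ioi 0, ‖deriv (fun w : ℝ => (1 + w) ^ (-b)) w‖ :=
    integral_nonneg fun _ => norm_nonneg _
  rw [smul_eq_mul] at herr
  linarith [le_of_abs_le herr, mul_le_of_le_one_left hnonneg hη1]

lemma exists_mul_tsum_one_add_abs_rpow_le {b : ℝ} (hb : 1 < b) :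
    ∃ C, ∀ η ∈ Ioc (0 : ℝ) 1, Summable (fun x : ℤ => (1 + |x * η|) ^ (-b)) ∧
      η * ∑' x : ℤ, (1 + |x * η|) ^ (-b) ≤ C := by
  obtain ⟨C, hC⟩ := exists_riemannSum_one_add_rpow_le hb
  refine ⟨1 + 2 * C, fun η hη => ?_⟩
  obtain ⟨hsum, hle⟩ := hC η hη
  have hcast : ∀ k : ℕ, |((k + 1 : ℕ) : ℤ) * η| = (k + 1) * η := fun k => by
    rw [Int.cast_natCast, abs_of_nonneg (by have := hη.1; positivity), Nat.cast_succ]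
  have hneg : ∀ x : ℤ, |((-x : ℤ) : ℝ) * η| = |x * η| := fun x => by
    rw [Int.cast_neg, neg_mul, abs_neg]
  have hnat : Summable fun k : ℕ => (1 + |((k : ℤ) : ℝ) * η|) ^ (-b) := by
    rw [← summable_nat_add_iff 1]
    simpa only [hcast] using hsum
  have hint : Summable fun x : ℤ => (1 + |x * η|) ^ (-b) :=
    hnat.of_nat_of_neg (by simpa only [hneg] using hnat)
  refine ⟨hint, ?_⟩
  rw [tsum_int_eq_zero_add_tsum_nat_succ hint]
  simp only [hneg, hcast, ← two_mul, tsum_mul_left, Int.cast_zero, zero_mul, abs_zero, add_zero,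
    Real.one_rpow]
  linarith [hη.2]

lemma exists_average_iSup_abs_generator_sub_fracLap_le {ι : Type*} {γ : ℝ}
    (hγ : γ ∈ Ioo (0 : ℝ) 2) (c : ℝ) {K M : ℝ≥0} {S : Set ι} {G : ι → ℝ → ℝ}
    (hG : ∀ s ∈ S, IsC11TestFunction K M (G s)) :
    ∃ C, ∀ n : ℕ, 0 < n → (n : ℝ)⁻¹ * ∑' x : ℤ, ⨆ s ∈ S,
        |(n : ℝ) ^ γ * (∑' y : ℤ, (G s (y / n) - G s (x / n)) * transP c γ (y - x))
          - fracLap c γ (G s) (x / n)|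
      ≤ C * (n : ℝ) ^ (-(1 - γ / 2)) := by
  obtain ⟨C, hC, herr⟩ := exists_abs_generator_sub_fracLap_le hγ c K M
  obtain ⟨D, hD⟩ := exists_mul_tsum_one_add_abs_rpow_le (by linarith [hγ.1] : 1 < γ + 1)
  refine ⟨C * D, fun n hn => ?_⟩
  obtain ⟨hsum, hle⟩ := hD (n : ℝ)⁻¹ ⟨by positivity, Nat.cast_inv_le_one n⟩
  simp only [← div_eq_mul_inv] at hsum hle
  have hbound : ∀ x : ℤ, (⨆ s ∈ S,
      |(n : ℝ) ^ γ * (∑' y : ℤ, (G s (y / n) - G s (x / n)) * transP c γ (y - x))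
        - fracLap c γ (G s) (x / n)|)
      ≤ C * (n : ℝ)⁻¹ ^ (1 - γ / 2) * (1 + |(x : ℝ) / n|) ^ (-(γ + 1)) := fun x =>
    Real.iSup_le (fun s => Real.iSup_le (fun hs => (herr (G s) (hG s hs) n hn x).trans_eq
      (mul_right_comm _ _ _)) (by positivity)) (by positivity)
  have hmajor := hsum.mul_left (C * (n : ℝ)⁻¹ ^ (1 - γ / 2))
  have htsum := (hmajor.of_nonneg_of_le (fun x => Real.iSup_nonneg fun s => Real.iSup_nonneg
    fun _ => abs_nonneg _) hbound).tsum_le_tsum hbound hmajor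
  rw [tsum_mul_left] at htsum
  rw [Real.rpow_neg (Nat.cast_nonneg n), ← Real.inv_rpow (Nat.cast_nonneg n)]
  refine (mul_le_mul_of_nonneg_left htsum (by positivity)).trans ?_
  rw [mul_left_comm, mul_right_comm C]
  exact mul_le_mul_of_nonneg_right (mul_le_mul_of_nonneg_left hle hC) (by positivity)

/-! ### Polynomials in time with smooth compactly supported coefficients -/

lemma exists_isC11TestFunction_of_contDiff {g : ℝ → ℝ} (hg : ContDiff ℝ 2 g)
    (hsupp : HasCompactSupport g) : ∃ K M, IsC11TestFunction K M g := by
  have hg' : ContDiff ℝ 1 (deriv g) := (contDiff_succ_iff_deriv.1 hg).2.2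
  obtain ⟨K, hK⟩ := hg'.lipschitzWith_of_hasCompactSupport hsupp.deriv one_ne_zero
  obtain ⟨M, hM⟩ := hsupp.isCompact.isBounded.exists_norm_le
  refine ⟨K, M.toNNReal, hg.differentiable two_ne_zero, hK, fun v hv => ?_⟩
  refine image_eq_zero_of_notMem_tsupport fun hmem => ?_
  exact (hM v hmem).not_gt ((Real.le_coe_toNNReal M).trans_lt hv)

namespace IsC11TestFunction

lemma mono {K K' M M' : ℝ≥0} {g : ℝ → ℝ} (hg : IsC11TestFunction K M g) (hK : K ≤ K')
    (hM : M ≤ M') : IsC11TestFunction K' M' g where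
  differentiable := hg.differentiable
  lipschitzWith_deriv := hg.lipschitzWith_deriv.weaken hK
  eq_zero v hv := hg.eq_zero v ((NNReal.coe_le_coe.2 hM).trans_lt hv)

lemma sum_mul_const {ι : Type*} {s : Finset ι} {K : ι → ℝ≥0} {M : ℝ≥0} {g : ι → ℝ → ℝ}
    (hg : ∀ i ∈ s, IsC11TestFunction (K i) M (g i)) (b : ι → ℝ) :
    IsC11TestFunction (∑ i ∈ s, K i * ‖b i‖₊) M (fun v => ∑ i ∈ s, g i v * b i) where
  differentiable := .fun_sum fun i hi => (hg i hi).differentiable.mul_const _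
  lipschitzWith_deriv := by
    have hderiv : deriv (fun v => ∑ i ∈ s, g i v * b i)
        = fun v => ∑ i ∈ s, deriv (g i) v * b i := by
      ext v
      rw [deriv_fun_sum fun i hi => ((hg i hi).differentiable v).mul_const _]
      exact Finset.sum_congr rfl fun i hi => deriv_mul_const ((hg i hi).differentiable v) _
    rw [hderiv]
    refine LipschitzWith.of_dist_le_mul fun v w => ?_
    rw [dist_eq_norm, ← Finset.sum_sub_distrib, NNReal.coe_sum, Finset.sum_mul]
    refine norm_sum_le_of_le s fun i hi => ?_
    rw [← sub_mul, norm_mul, ← dist_eq_norm, NNReal.coe_mul, coe_nnnorm, mul_right_comm]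
    exact mul_le_mul_of_nonneg_right ((hg i hi).lipschitzWith_deriv.dist_le_mul v w)
      (norm_nonneg _)
  eq_zero v hv := Finset.sum_eq_zero fun i hi => by rw [(hg i hi).eq_zero v hv, zero_mul]

end IsC11TestFunction

lemma SDifMem.exists_isC11TestFunction {G : ℝ → ℝ → ℝ} (hG : SDifMem G) (T : ℝ) :
    ∃ K M, ∀ s ∈ Icc 0 T, IsC11TestFunction K M (G s) := by
  obtain ⟨k, a, ha, hGa⟩ := hG
  choose K M hKM using fun j => exists_isC11TestFunction_of_contDiff
    ((ha j).1.of_le (WithTop.coe_le_coe.2 le_top)) (ha j).2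
  have hM : ∀ j ∈ Finset.range (k + 1), M j ≤ ∑ i ∈ Finset.range (k + 1), M i := fun j hj =>
    Finset.single_le_sum (fun _ _ => zero_le) hj
  refine ⟨∑ j ∈ Finset.range (k + 1), K j * ‖T ^ j‖₊, ∑ j ∈ Finset.range (k + 1), M j,
    fun s hs => ?_⟩
  rw [funext (hGa s)]
  refine (IsC11TestFunction.sum_mul_const (fun j hj => (hKM j).mono le_rfl (hM j hj))
    (fun j => s ^ j)).mono (Finset.sum_le_sum fun j _ => ?_) le_rfl
  rw [nnnorm_pow, nnnorm_pow]
  gcongr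
  exact NNReal.coe_le_coe.1 (by simpa [abs_of_nonneg hs.1] using hs.2.trans (le_abs_self T))

theorem stmt12_general {ι : Type*} {γ : ℝ} (hγ : γ ∈ Ioo (0 : ℝ) 2) (c : ℝ) {K M : ℝ≥0}
    {S : Set ι} {G : ι → ℝ → ℝ} (hG : ∀ s ∈ S, IsC11TestFunction K M (G s)) :
    Tendsto (fun n : ℕ => (n : ℝ)⁻¹ * ∑' x : ℤ, ⨆ s ∈ S,
        |(n : ℝ) ^ γ * (∑' y : ℤ, (G s (y / n) - G s (x / n)) * transP c γ (y - x))
          - fracLap c γ (G s) (x / n)|)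
      atTop (𝓝 0) := by
  obtain ⟨C, hC⟩ := exists_average_iSup_abs_generator_sub_fracLap_le hγ c hG
  have hrate : Tendsto (fun n : ℕ => C * (n : ℝ) ^ (-(1 - γ / 2))) atTop (𝓝 0) := by
    have hexp : 0 < 1 - γ / 2 := by linarith [hγ.2]
    simpa only [mul_zero, Function.comp_def] using
      ((tendsto_rpow_neg_atTop hexp).comp tendsto_natCast_atTop_atTop).const_mul C
  refine squeeze_zero' (Eventually.of_forall fun n => ?_) ?_ hrate
  · exact mul_nonneg (by positivity) (tsum_nonneg fun x => Real.iSup_nonneg fun s =>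
      Real.iSup_nonneg fun _ => abs_nonneg _)
  · filter_upwards [eventually_gt_atTop 0] with n hn using hC n hn

theorem stmt12 (γ c T : ℝ) (hγ : γ ∈ Set.Ioo (0 : ℝ) 2) (hc : 0 < c)
    (hprob : HasSum (transP c γ) 1) (hT : 0 < T)
    (G : ℝ → ℝ → ℝ) (hG : SDifMem G) :
    Tendsto (fun n : ℕ => (n : ℝ)⁻¹ * ∑' x : ℤ,
        ⨆ s ∈ Set.Icc (0 : ℝ) T,
          |(n : ℝ) ^ γ * (∑' y : ℤ, (G s ((y : ℝ) / n) - G s ((x : ℝ) / n)) * transP c γ (y - x))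
            - fracLap c γ (G s) ((x : ℝ) / n)|)
      atTop (𝓝 0) := by
  obtain ⟨K, M, h⟩ := hG.exists_isC11TestFunction T
  exact stmt12_general hγ c h
end
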